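/- If finite posets A and B satisfy s_k(O(A)) ≤ s_k(C(A)) and s_k(O(B)) ≤ s_k(C(B)) for all k, then s_k(O(A < B)) ≤ s_k(C(A < B)) for all k, where A < B is the ordinal sum. -/

import Mathlib

open Set

variable {E : Type*} [AddCommGroup E] [Module ℝ E]

/-- A polytope: the convex hull of a finite set of points. -/
def IsPolytope (P : Set E) : Prop := ∃ S : Finset E, P = convexHull ℝ (S : Set E)

open Classical in
/-- Dimension of a polytope: `-1` for the empty set, else the dimension of its affine span. -/
noncomputable def polyDim (P : Set E) : ℤ :=
  if P = ∅ then -1 else (Module.finrank ℝ (vectorSpan ℝ P) : ℤ)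

/-- Number of vertices (extreme points). -/
noncomputable def vertexCount (P : Set E) : ℕ := (P.extremePoints ℝ).ncard

/-- A simplex: a polytope with `dim + 1` vertices (the empty set counts as a simplex). -/
def IsSimplex (P : Set E) : Prop :=
  IsPolytope P ∧ (vertexCount P : ℤ) = polyDim P + 1

/-- Faces of a polytope are its extreme subsets. -/
def IsFaceOf (F P : Set E) : Prop := IsExtreme ℝ P F

/-- Number of `k`-dimensional simplex faces of `P`. -/
noncomputable def simpCount (P : Set E) (k : ℤ) : ℕ :=
  {F : Set E | IsFaceOf F P ∧ IsSimplex F ∧ polyDim F = k}.ncard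

/-- Number of `k`-dimensional simplex faces of `P` containing the origin. -/
noncomputable def simpCount0 (P : Set E) (k : ℤ) : ℕ :=
  {F : Set E | IsFaceOf F P ∧ IsSimplex F ∧ polyDim F = k ∧ (0 : E) ∈ F}.ncard

/-- Number of `k`-dimensional simplex faces of `P` not containing the origin. -/
noncomputable def simpCount1 (P : Set E) (k : ℤ) : ℕ :=
  {F : Set E | IsFaceOf F P ∧ IsSimplex F ∧ polyDim F = k ∧ (0 : E) ∉ F}.ncard

/-- The order polytope of a poset. -/
def orderPolytope (α : Type*) [PartialOrder α] : Set (α → ℝ) :=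
  {x | (∀ p, 0 ≤ x p ∧ x p ≤ 1) ∧ ∀ p q : α, p ≤ q → x p ≤ x q}

/-- The chain polytope of a poset. -/
def chainPolytope (α : Type*) [PartialOrder α] : Set (α → ℝ) :=
  {x | (∀ p, 0 ≤ x p) ∧ ∀ s : Finset α, IsChain (· ≤ ·) (s : Set α) → ∑ p ∈ s, x p ≤ 1}

open Classical in
/-- Characteristic vector of a subset. -/
noncomputable def chi {α : Type*} (S : Set α) : α → ℝ := fun p => if p ∈ S then 1 else 0

/-!
Up to affine isomorphism, `O(A < B)` is the join of `O(A)` and `O(Bᵒᵖ)`, and `C(A < B)` is the join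
of `C(A)` and `C(B)`. A simplex face of a join is spanned by a pair of simplex faces that both
contain or both miss the origin, so that `S_{P ∨ Q} = S¹_P S¹_Q + S⁰_P S⁰_Q / x`, where `S¹` and
`S⁰` count the simplex faces missing and containing the origin.

For a single poset, put `α = S⁰_C / x`, `β = S⁰_O / x`, `γ = S¹_O` and `δ = S¹_C`. Then `0 ≤ α ≤ β`:
the simplex faces of the chain polytope at the origin come from chains, and every chain also spans
such a face of the order polytope, through the indicators of its principal filters. Removing the
origin from a simplex face gives `β ≤ γ`, and the hypothesis says `γ + x β ≤ δ + x α`. These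
inequalities for `A` and `B` imply `γ γ' + x β β' ≤ δ δ' + x α α'`, which is the claim.
-/

section Homogenization

/-- The homogenization of `X`: the cone over `{1} × X` in `ℝ × E`. It turns convex combinations
into nonnegative ones, so that faces of `convexHull ℝ X` become faces of a cone. -/
def homogCone (X : Set E) : PointedCone ℝ (ℝ × E) :=
  PointedCone.hull ℝ (Prod.mk 1 '' X)

variable {P X Y : Set E}

theorem homogCone_mono (h : X ⊆ Y) : homogCone X ≤ homogCone Y :=
  Submodule.span_mono (image_mono h)

theorem mk_one_mem_homogCone_of_mem {x : E} (hx : x ∈ X) : ((1 : ℝ), x) ∈ homogCone X :=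
  PointedCone.subset_hull (mem_image_of_mem _ hx)

theorem convex_setOf_mk_mem_homogCone (s : ℝ) : Convex ℝ {x : E | (s, x) ∈ homogCone X} := by
  intro x hx y hy a b ha hb hab
  have := add_mem ((homogCone X).smul_mem ha hx) ((homogCone X).smul_mem hb hy)
  simpa [← add_mul, hab] using this

theorem mem_homogCone_iff {z : ℝ × E} :
    z ∈ homogCone X ↔ z = 0 ∨ ∃ s : ℝ, 0 < s ∧ ∃ p ∈ convexHull ℝ X, z = s • (1, p) := by
  constructor
  · intro hz
    induction hz using Submodule.span_induction with
    | mem z hz =>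
      obtain ⟨x, hx, rfl⟩ := hz
      exact Or.inr ⟨1, one_pos, x, subset_convexHull ℝ X hx, (one_smul _ _).symm⟩
    | zero => exact Or.inl rfl
    | add y z _ _ hy hz =>
      obtain rfl | ⟨s, hs, p, hp, rfl⟩ := hy
      · rwa [zero_add]
      obtain rfl | ⟨t, ht, q, hq, rfl⟩ := hz
      · rw [add_zero]
        exact Or.inr ⟨s, hs, p, hp, rfl⟩
      have hst : 0 < s + t := add_pos hs ht
      refine Or.inr ⟨s + t, hst, (s / (s + t)) • p + (t / (s + t)) • q,
        convex_iff_div.1 (convex_convexHull ℝ X) hp hq hs.le ht.le hst, ?_⟩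
      simp [smul_smul, mul_div_cancel₀, hst.ne']
    | smul a z _ hz =>
      obtain rfl | ⟨s, hs, p, hp, rfl⟩ := hz
      · exact Or.inl (smul_zero a)
      obtain rfl | ha := eq_zero_or_pos a
      · exact Or.inl (zero_smul _ _)
      · exact Or.inr ⟨a * s, mul_pos ha hs, p, hp, smul_smul (a : ℝ) s _⟩
  · rintro (rfl | ⟨s, hs, p, hp, rfl⟩)
    · exact zero_mem _
    · exact (homogCone X).smul_mem hs.le <| convexHull_min
        (fun _ ↦ mk_one_mem_homogCone_of_mem) (convex_setOf_mk_mem_homogCone 1) hp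

theorem fst_nonneg_of_mem_homogCone {z : ℝ × E} (hz : z ∈ homogCone X) : 0 ≤ z.1 := by
  obtain rfl | ⟨s, hs, p, -, rfl⟩ := mem_homogCone_iff.1 hz
  · exact le_rfl
  · simpa using hs.le

theorem mk_mem_homogCone_iff_of_pos {s : ℝ} (hs : 0 < s) {x : E} :
    (s, x) ∈ homogCone X ↔ s⁻¹ • x ∈ convexHull ℝ X := by
  rw [mem_homogCone_iff]
  constructor
  · rintro (h | ⟨t, -, p, hp, h⟩)
    · exact absurd (congrArg Prod.fst h) hs.ne'
    · obtain ⟨rfl, rfl⟩ : s = t ∧ x = t • p := by simpa using h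
      rwa [inv_smul_smul₀ hs.ne']
  · exact fun h ↦ Or.inr ⟨s, hs, s⁻¹ • x, h, by simp [smul_inv_smul₀ hs.ne']⟩

theorem mk_zero_mem_homogCone_iff {x : E} : ((0 : ℝ), x) ∈ homogCone X ↔ x = 0 := by
  rw [mem_homogCone_iff]
  constructor
  · rintro (h | ⟨s, hs, p, -, h⟩)
    · exact congrArg Prod.snd h
    · exact absurd (by simpa using congrArg Prod.fst h) hs.ne
  · rintro rfl
    exact Or.inl rfl

theorem mk_one_mem_homogCone_iff {x : E} :
    ((1 : ℝ), x) ∈ homogCone X ↔ x ∈ convexHull ℝ X := by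
  rw [mk_mem_homogCone_iff_of_pos one_pos, inv_one, one_smul]

theorem mk_mem_homogCone_of_le {s t : ℝ} {x : E} (h0 : (0 : E) ∈ convexHull ℝ X)
    (h : (s, x) ∈ homogCone X) (hst : s ≤ t) : (t, x) ∈ homogCone X := by
  have := add_mem h <|
    (homogCone X).smul_mem (sub_nonneg.2 hst) (mk_one_mem_homogCone_iff.2 h0)
  simpa using this

theorem snd_mem_span_of_mem_homogCone {z : ℝ × E} (hz : z ∈ homogCone X) :
    z.2 ∈ Submodule.span ℝ X := by
  induction hz using Submodule.span_induction with
  | mem z hz =>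
    obtain ⟨x, hx, rfl⟩ := hz
    exact Submodule.subset_span hx
  | zero => exact zero_mem _
  | add y z _ _ hy hz => exact add_mem hy hz
  | smul a z _ hz => exact Submodule.smul_mem _ (a : ℝ) hz

theorem mem_homogCone_insert_iff {x : E} {z : ℝ × E} :
    z ∈ homogCone (insert x X) ↔ ∃ a : ℝ, 0 ≤ a ∧ z - a • (1, x) ∈ homogCone X := by
  rw [homogCone, image_insert_eq, PointedCone.hull, Submodule.mem_span_insert]
  constructor
  · rintro ⟨a, v, hv, rfl⟩
    exact ⟨a, a.2, by rwa [show a • ((1 : ℝ), x) = (a : ℝ) • (1, x) from rfl, add_sub_cancel_left]⟩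
  · rintro ⟨a, ha, h⟩
    exact ⟨⟨a, ha⟩, _, h, (add_sub_cancel _ z).symm⟩

theorem homogCone_convexHull (X : Set E) : homogCone (convexHull ℝ X) = homogCone X := by
  ext z
  simp only [mem_homogCone_iff, (convexHull ℝ).idempotent X]

theorem isFaceOf_homogCone_iff (hP : Convex ℝ P) :
    (homogCone X).IsFaceOf (homogCone P) ↔ IsExtreme ℝ P (convexHull ℝ X) := by
  constructor
  · intro h
    refine ⟨fun x hx ↦ ?_, fun p hp q hq z hz ⟨a, b, ha, hb, hab, hpq⟩ ↦ ?_⟩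
    · simpa [mk_one_mem_homogCone_iff, hP.convexHull_eq] using
        h.le (mk_one_mem_homogCone_iff.2 hx)
    · rw [← mk_one_mem_homogCone_iff] at hz ⊢
      refine h.mem_of_smul_add_smul_mem_left (mk_one_mem_homogCone_of_mem hp)
        (mk_one_mem_homogCone_of_mem hq) ha hb ?_
      simpa [hab, hpq] using hz
  · intro h
    refine .of_mem_of_add_mem_left
      (homogCone_mono ((subset_convexHull ℝ X).trans h.subset)) fun {x y} hx hy hxy ↦ ?_
    obtain rfl | ⟨s, hs, p, hp, rfl⟩ := mem_homogCone_iff.1 hx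
    · exact zero_mem _
    obtain rfl | ⟨t, ht, q, hq, rfl⟩ := mem_homogCone_iff.1 hy
    · rwa [add_zero] at hxy
    rw [hP.convexHull_eq] at hp hq
    have hst : 0 < s + t := add_pos hs ht
    have hz : (s + t)⁻¹ • (s • p + t • q) ∈ convexHull ℝ X := by
      rw [← mk_mem_homogCone_iff_of_pos hst]
      simpa using hxy
    refine (homogCone X).smul_mem hs.le (mk_one_mem_homogCone_iff.2 ?_)
    refine h.left_mem_of_mem_openSegment hp hq hz (mem_openSegment_iff_div.2 ⟨s, t, hs, ht, ?_⟩)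
    simp only [smul_add, smul_smul, div_eq_inv_mul]

theorem mem_convexHull_of_add_smul_mem (hP : Convex ℝ P)
    (hX : IsExtreme ℝ P (convexHull ℝ X)) (h0 : 0 ∈ convexHull ℝ X) {x y : E} (hx : x ∈ P)
    (hy : y ∈ P) {a : ℝ} (ha : 0 < a) (h : a • x + y ∈ convexHull ℝ X) : x ∈ convexHull ℝ X := by
  rw [← mk_one_mem_homogCone_iff] at h ⊢
  refine ((isFaceOf_homogCone_iff hP).2 hX).mem_of_smul_add_smul_mem_left
    (mk_one_mem_homogCone_of_mem hx) (mk_one_mem_homogCone_of_mem hy) ha one_pos ?_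
  simpa using mk_mem_homogCone_of_le h0 h (le_add_of_nonneg_left ha.le)

end Homogenization

section SimplicialFaces

theorem affineIndependent_iff_linearIndependent_mk_one {ι : Type*} {v : ι → E} :
    AffineIndependent ℝ v ↔ LinearIndependent ℝ fun i ↦ ((1 : ℝ), v i) := by
  simp only [affineIndependent_iff, linearIndependent_iff', Prod.ext_iff, Prod.fst_sum,
    Prod.snd_sum, Prod.smul_fst, Prod.smul_snd, smul_eq_mul, mul_one, Prod.fst_zero,
    Prod.snd_zero, and_imp]

theorem affineIndependent_coe_iff_linearIndepOn_mk_one {T : Set E} :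
    AffineIndependent ℝ ((↑) : T → E) ↔ LinearIndepOn ℝ (Prod.mk (1 : ℝ)) T :=
  affineIndependent_iff_linearIndependent_mk_one

theorem affineIndependent_insert_zero_iff {T : Set E} (h0 : (0 : E) ∉ T) :
    AffineIndependent ℝ ((↑) : ↥(insert 0 T) → E) ↔ LinearIndepOn ℝ id T := by
  have himage : {(0 : E)} ∪ (fun v ↦ v +ᵥ (0 : E)) '' T = insert 0 T := by
    simp only [vadd_eq_add, add_zero, image_id', singleton_union]
  rw [← himage, ← linearIndependent_set_iff_affineIndependent_vadd_union_singleton ℝ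
    (fun v hv ↦ ne_of_mem_of_not_mem hv h0)]
  rfl

theorem isFaceOf_hull_of_linearIndepOn {B B' : Set E} (hB : LinearIndepOn ℝ id B) (h : B' ⊆ B) :
    (PointedCone.hull ℝ B').IsFaceOf (PointedCone.hull ℝ B) := by
  refine .of_mem_of_add_mem_left (Submodule.span_mono h) fun hx hy hxy ↦ ?_
  obtain ⟨c, hcB, hc, rfl⟩ := PointedCone.mem_hull_set.1 hx
  obtain ⟨d, hdB, hd, rfl⟩ := PointedCone.mem_hull_set.1 hy
  obtain ⟨e, heB', -, he⟩ := PointedCone.mem_hull_set.1 hxy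
  have hcde : c + d = e := by
    refine linearIndepOn_iffₛ.1 hB _ (Submodule.add_mem _ hcB hdB) _ (heB'.trans h) ?_
    rw [map_add]
    exact he.symm
  refine PointedCone.mem_hull_set.2 ⟨c, fun b hb ↦ heB' ?_, hc, rfl⟩
  have hcb : 0 < c b := (hc b).lt_of_ne' (Finsupp.mem_support_iff.1 hb)
  rw [Finset.mem_coe, ← hcde, Finsupp.mem_support_iff, Finsupp.add_apply]
  exact (add_pos_of_pos_of_nonneg hcb (hd b)).ne'

theorem isExtreme_convexHull_of_affineIndependent {T T' : Set E}
    (hT : AffineIndependent ℝ ((↑) : T → E)) (h : T' ⊆ T) :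
    IsExtreme ℝ (convexHull ℝ T) (convexHull ℝ T') := by
  rw [← isFaceOf_homogCone_iff (convex_convexHull ℝ T), homogCone_convexHull]
  rw [affineIndependent_coe_iff_linearIndepOn_mk_one] at hT
  exact isFaceOf_hull_of_linearIndepOn hT.id_image (image_mono h)

theorem extremePoints_convexHull_of_affineIndependent {T : Set E}
    (hT : AffineIndependent ℝ ((↑) : T → E)) :
    (convexHull ℝ T).extremePoints ℝ = T := by
  refine extremePoints_convexHull_subset.antisymm fun v hv ↦ isExtreme_singleton.1 ?_
  simpa using isExtreme_convexHull_of_affineIndependent hT (singleton_subset_iff.2 hv)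

theorem exists_eq_sub_of_mem_span {C : PointedCone ℝ E} {z : E}
    (hz : z ∈ Submodule.span ℝ (C : Set E)) : ∃ x ∈ C, ∃ y ∈ C, z = x - y := by
  induction hz using Submodule.span_induction with
  | mem z hz => exact ⟨z, hz, 0, zero_mem C, (sub_zero z).symm⟩
  | zero => exact ⟨0, zero_mem C, 0, zero_mem C, (sub_zero 0).symm⟩
  | add _ _ _ _ hz hz' =>
    obtain ⟨x, hx, y, hy, rfl⟩ := hz
    obtain ⟨x', hx', y', hy', rfl⟩ := hz'
    exact ⟨x + x', add_mem hx hx', y + y', add_mem hy hy', sub_add_sub_comm x y x' y'⟩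
  | smul a _ _ hz =>
    obtain ⟨x, hx, y, hy, rfl⟩ := hz
    obtain ha | ha := le_total 0 a
    · exact ⟨a • x, C.smul_mem ha hx, a • y, C.smul_mem ha hy, smul_sub a x y⟩
    · have ha' : 0 ≤ -a := neg_nonneg.2 ha
      refine ⟨(-a) • y, C.smul_mem ha' hy, (-a) • x, C.smul_mem ha' hx, ?_⟩
      rw [neg_smul, neg_smul, neg_sub_neg, smul_sub]

theorem mem_of_isFaceOf_of_mem_span {C F : PointedCone ℝ E} (hF : F.IsFaceOf C) {z : E}
    (hz : z ∈ C) (hspan : z ∈ Submodule.span ℝ (F : Set E)) : z ∈ F := by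
  obtain ⟨x, hx, y, hy, rfl⟩ := exists_eq_sub_of_mem_span hspan
  exact hF.mem_of_add_mem_left hz (hF.le hy) (by rwa [sub_add_cancel])

/-- A simplex face missing the origin stays a simplex after coning from the origin. -/
theorem linearIndepOn_id_of_isExtreme {P T : Set E} (hP : Convex ℝ P) (h0P : (0 : E) ∈ P)
    (hT : AffineIndependent ℝ ((↑) : T → E)) (hext : IsExtreme ℝ P (convexHull ℝ T))
    (h0 : (0 : E) ∉ convexHull ℝ T) : LinearIndepOn ℝ id T := by
  have h0T : (0 : E) ∉ T := fun h ↦ h0 (subset_convexHull ℝ T h)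
  rw [← affineIndependent_insert_zero_iff h0T, affineIndependent_coe_iff_linearIndepOn_mk_one]
  rw [affineIndependent_coe_iff_linearIndepOn_mk_one] at hT
  refine hT.insert fun hspan ↦ h0 ?_
  rw [← mk_one_mem_homogCone_iff]
  exact mem_of_isFaceOf_of_mem_span ((isFaceOf_homogCone_iff hP).2 hext)
    (mk_one_mem_homogCone_of_mem h0P) (Submodule.span_mono PointedCone.subset_hull hspan)

end SimplicialFaces

section Join

variable {F : Type*} [AddCommGroup F] [Module ℝ F]

/-- The union of `T` and `U`, placed in the two summands of `E × F`: the vertex set of a join. -/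
def wedge (T : Set E) (U : Set F) : Set (E × F) :=
  LinearMap.inl ℝ E F '' T ∪ LinearMap.inr ℝ E F '' U

/-- The join `P ∨ Q`: the convex hull of `P` and `Q` placed in complementary summands, so that they
share the origin. -/
def join (P : Set E) (Q : Set F) : Set (E × F) :=
  convexHull ℝ (wedge P Q)

variable {P T : Set E} {Q U : Set F}

theorem mem_wedge {z : E × F} : z ∈ wedge T U ↔ z.1 ∈ T ∧ z.2 = 0 ∨ z.1 = 0 ∧ z.2 ∈ U := by
  simp only [wedge, mem_union, mem_image, LinearMap.inl_apply, LinearMap.inr_apply, Prod.ext_iff]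
  aesop

theorem wedge_insert_zero : wedge (insert 0 T) (insert 0 U) = insert 0 (wedge T U) := by
  simp only [wedge, image_insert_eq, map_zero, insert_union, union_insert, insert_idem]

theorem homogCone_image (f : E →ₗ[ℝ] F) (X : Set E) :
    homogCone (f '' X) = (homogCone X).map (LinearMap.prodMap LinearMap.id f) := by
  simp only [homogCone, PointedCone.map, PointedCone.hull, Submodule.map_span, image_image]
  rfl

theorem mk_mem_homogCone_wedge_iff {r : ℝ} {x : E} {y : F} :
    (r, x, y) ∈ homogCone (wedge T U) ↔
      ∃ s t : ℝ, s + t = r ∧ (s, x) ∈ homogCone T ∧ (t, y) ∈ homogCone U := by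
  have hsup : homogCone (wedge T U) =
      homogCone (LinearMap.inl ℝ E F '' T) ⊔ homogCone (LinearMap.inr ℝ E F '' U) := by
    simp only [homogCone, wedge, image_union]
    exact Submodule.span_union _ _
  simp only [hsup, homogCone_image, Submodule.mem_sup, PointedCone.mem_map]
  constructor
  · rintro ⟨_, ⟨⟨s, x'⟩, hx, rfl⟩, _, ⟨⟨t, y'⟩, hy, rfl⟩, h⟩
    obtain ⟨rfl, rfl, rfl⟩ : s + t = r ∧ x' = x ∧ y' = y := by simpa using h
    exact ⟨s, t, rfl, hx, hy⟩
  · rintro ⟨s, t, rfl, hx, hy⟩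
    exact ⟨_, ⟨(s, x), hx, rfl⟩, _, ⟨(t, y), hy, rfl⟩, by simp⟩

theorem mem_join_iff {z : E × F} :
    z ∈ join P Q ↔
      ∃ s t : ℝ, s + t = 1 ∧ (s, z.1) ∈ homogCone P ∧ (t, z.2) ∈ homogCone Q := by
  rw [join, ← mk_one_mem_homogCone_iff, mk_mem_homogCone_wedge_iff]

theorem mk_inl_mem_homogCone_wedge_iff (h0 : (0 : F) ∈ convexHull ℝ U → (0 : E) ∈ convexHull ℝ T)
    {s : ℝ} {x : E} : (s, x, (0 : F)) ∈ homogCone (wedge T U) ↔ (s, x) ∈ homogCone T := by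
  rw [mk_mem_homogCone_wedge_iff]
  constructor
  · rintro ⟨s, t, rfl, hx, ht⟩
    obtain rfl | htpos := (fst_nonneg_of_mem_homogCone ht).eq_or_lt
    · simpa using hx
    · rw [mk_mem_homogCone_iff_of_pos htpos, smul_zero] at ht
      exact mk_mem_homogCone_of_le (h0 ht) hx (le_add_of_nonneg_right htpos.le)
  · exact fun hx ↦ ⟨s, 0, add_zero s, hx, zero_mem _⟩

theorem mk_inr_mem_homogCone_wedge_iff (h0 : (0 : E) ∈ convexHull ℝ T → (0 : F) ∈ convexHull ℝ U)
    {t : ℝ} {y : F} : (t, (0 : E), y) ∈ homogCone (wedge T U) ↔ (t, y) ∈ homogCone U := by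
  rw [mk_mem_homogCone_wedge_iff]
  constructor
  · rintro ⟨s, t, rfl, hs, hy⟩
    obtain rfl | hspos := (fst_nonneg_of_mem_homogCone hs).eq_or_lt
    · simpa using hy
    · rw [mk_mem_homogCone_iff_of_pos hspos, smul_zero] at hs
      exact mk_mem_homogCone_of_le (h0 hs) hy (le_add_of_nonneg_left hspos.le)
  · exact fun hy ↦ ⟨0, t, zero_add t, zero_mem _, hy⟩

theorem mem_of_isFaceOf_homogCone_of_lt (h0P : (0 : E) ∈ P)
    (hT : (homogCone T).IsFaceOf (homogCone P)) {s s' : ℝ} {x : E} (hx : (s, x) ∈ homogCone P)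
    (hx' : (s', x) ∈ homogCone T) (hs : s < s') :
    (0 : E) ∈ convexHull ℝ T ∧ (s, x) ∈ homogCone T := by
  have hsum : (s' - s) • ((1 : ℝ), (0 : E)) + (1 : ℝ) • (s, x) = (s', x) := by simp
  rw [← hsum] at hx'
  have h1 := mk_one_mem_homogCone_of_mem h0P
  exact ⟨mk_one_mem_homogCone_iff.1 <|
      hT.mem_of_smul_add_smul_mem_left h1 hx (sub_pos.2 hs) one_pos hx',
    hT.mem_of_smul_add_smul_mem_right h1 hx (sub_pos.2 hs) one_pos hx'⟩

/-- If two faces both contain the origin, or both miss it, then the way a height is split between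
them does not matter. -/
theorem mk_mem_of_isFaceOf_homogCone_of_add_eq (h0P : (0 : E) ∈ P) (h0Q : (0 : F) ∈ Q)
    (h0 : (0 : E) ∈ convexHull ℝ T ↔ (0 : F) ∈ convexHull ℝ U)
    (hT : (homogCone T).IsFaceOf (homogCone P)) (hU : (homogCone U).IsFaceOf (homogCone Q))
    {s t s' t' : ℝ} {x : E} {y : F} (hx : (s, x) ∈ homogCone P) (hy : (t, y) ∈ homogCone Q)
    (hx' : (s', x) ∈ homogCone T) (hy' : (t', y) ∈ homogCone U) (hst : s' + t' = s + t) :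
    (s, x) ∈ homogCone T ∧ (t, y) ∈ homogCone U := by
  obtain hs | rfl | hs := lt_trichotomy s s'
  · obtain ⟨hT0, hxT⟩ := mem_of_isFaceOf_homogCone_of_lt h0P hT hx hx' hs
    exact ⟨hxT, mk_mem_homogCone_of_le (h0.1 hT0) hy' (by linarith)⟩
  · exact ⟨hx', by rwa [← add_left_cancel hst]⟩
  · obtain ⟨hU0, hyU⟩ := mem_of_isFaceOf_homogCone_of_lt h0Q hU hy hy' (by linarith)
    exact ⟨mk_mem_homogCone_of_le (h0.2 hU0) hx' hs.le, hyU⟩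

theorem isFaceOf_homogCone_wedge_iff (h0P : (0 : E) ∈ P) (h0Q : (0 : F) ∈ Q)
    (h0 : (0 : E) ∈ convexHull ℝ T ↔ (0 : F) ∈ convexHull ℝ U) :
    (homogCone (wedge T U)).IsFaceOf (homogCone (wedge P Q)) ↔
      (homogCone T).IsFaceOf (homogCone P) ∧ (homogCone U).IsFaceOf (homogCone Q) := by
  have h0P' := subset_convexHull ℝ P h0P
  have h0Q' := subset_convexHull ℝ Q h0Q
  constructor
  · intro h
    constructor
    · convert h.comap (LinearMap.prodMap LinearMap.id (LinearMap.inl ℝ E F)) using 1 <;> ext ⟨s, x⟩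
      · exact (mk_inl_mem_homogCone_wedge_iff h0.2).symm
      · exact (mk_inl_mem_homogCone_wedge_iff fun _ ↦ h0P').symm
    · convert h.comap (LinearMap.prodMap LinearMap.id (LinearMap.inr ℝ E F)) using 1 <;> ext ⟨s, x⟩
      · exact (mk_inr_mem_homogCone_wedge_iff h0.1).symm
      · exact (mk_inr_mem_homogCone_wedge_iff fun _ ↦ h0Q').symm
  · rintro ⟨hT, hU⟩
    refine .of_mem_of_add_mem_left (fun ⟨r, x, y⟩ h ↦ ?_) fun {z w} hz hw hzw ↦ ?_
    · obtain ⟨s, t, hst, hx, hy⟩ := mk_mem_homogCone_wedge_iff.1 h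
      exact mk_mem_homogCone_wedge_iff.2 ⟨s, t, hst, hT.le hx, hU.le hy⟩
    · obtain ⟨s, t, hst, hx, hy⟩ := mk_mem_homogCone_wedge_iff.1 hz
      obtain ⟨s', t', hst', hx', hy'⟩ := mk_mem_homogCone_wedge_iff.1 hw
      obtain ⟨a, b, hab, hxT, hyU⟩ := mk_mem_homogCone_wedge_iff.1 hzw
      have hsplit : a + b = s + s' + (t + t') := by
        rw [add_add_add_comm, hst, hst']
        exact hab
      obtain ⟨hT', hU'⟩ := mk_mem_of_isFaceOf_homogCone_of_add_eq h0P h0Q h0 hT hU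
        (add_mem hx hx') (add_mem hy hy') hxT hyU hsplit
      exact mk_mem_homogCone_wedge_iff.2 ⟨s, t, hst, hT.mem_of_add_mem_left hx hx' hT',
        hU.mem_of_add_mem_left hy hy' hU'⟩

theorem isExtreme_join_iff (hP : Convex ℝ P) (hQ : Convex ℝ Q) (h0P : (0 : E) ∈ P)
    (h0Q : (0 : F) ∈ Q) (h0 : (0 : E) ∈ convexHull ℝ T ↔ (0 : F) ∈ convexHull ℝ U) :
    IsExtreme ℝ (join P Q) (convexHull ℝ (wedge T U)) ↔
      IsExtreme ℝ P (convexHull ℝ T) ∧ IsExtreme ℝ Q (convexHull ℝ U) := by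
  rw [← isFaceOf_homogCone_iff hP, ← isFaceOf_homogCone_iff hQ,
    ← isFaceOf_homogCone_wedge_iff h0P h0Q h0, join,
    ← isFaceOf_homogCone_iff (convex_convexHull ℝ _), homogCone_convexHull]

theorem zero_mem_extremePoints_join_iff (hP : Convex ℝ P) (hQ : Convex ℝ Q) (h0P : (0 : E) ∈ P)
    (h0Q : (0 : F) ∈ Q) :
    0 ∈ (join P Q).extremePoints ℝ ↔ 0 ∈ P.extremePoints ℝ ∧ 0 ∈ Q.extremePoints ℝ := by
  have hwedge : wedge {(0 : E)} {(0 : F)} = {0} := by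
    simp only [wedge, image_singleton, map_zero, union_self]
  simpa [hwedge] using
    isExtreme_join_iff (T := {0}) (U := {0}) hP hQ h0P h0Q (by simp)

theorem extremePoints_join_subset (hP : Convex ℝ P) (hQ : Convex ℝ Q) (h0P : (0 : E) ∈ P)
    (h0Q : (0 : F) ∈ Q) :
    (join P Q).extremePoints ℝ ⊆ wedge (P.extremePoints ℝ) (Q.extremePoints ℝ) := by
  rintro ⟨x, y⟩ hz
  obtain ⟨-, rfl⟩ | ⟨rfl, -⟩ := mem_wedge.1 (extremePoints_convexHull_subset hz)
  · refine mem_wedge.2 (.inl ⟨?_, rfl⟩)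
    obtain rfl | hx := eq_or_ne x 0
    · exact ((zero_mem_extremePoints_join_iff hP hQ h0P h0Q).1 hz).1
    · have := isExtreme_join_iff (T := {x}) (U := ∅) hP hQ h0P h0Q (by simpa using hx.symm)
      simp_all [wedge]
  · refine mem_wedge.2 (.inr ⟨rfl, ?_⟩)
    obtain rfl | hy := eq_or_ne y 0
    · exact ((zero_mem_extremePoints_join_iff hP hQ h0P h0Q).1 hz).2
    · have := isExtreme_join_iff (T := ∅) (U := {y}) hP hQ h0P h0Q (by simpa using hy.symm)
      simp_all [wedge]

end Join

section VertexSets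

variable {F : Type*} [AddCommGroup F] [Module ℝ F]

/-- The simplex faces of `P`, each encoded by its vertex set. -/
def simplexFaces (P : Set E) : Set (Set E) :=
  {T | AffineIndependent ℝ ((↑) : T → E) ∧ IsExtreme ℝ P (convexHull ℝ T)}

/-- The deletion of the origin from the complex of simplex faces: the vertex sets of the simplex
faces missing the origin. Coning from the origin makes them linearly independent. -/
def originDeletion (P : Set E) : Set (Set E) :=
  {T | LinearIndepOn ℝ id T ∧ IsExtreme ℝ P (convexHull ℝ T)}

/-- The link of the origin in the complex of simplex faces: the sets of nonzero vertices of the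
simplex faces containing the origin. -/
def originLink (P : Set E) : Set (Set E) :=
  {T | LinearIndepOn ℝ id T ∧ IsExtreme ℝ P (convexHull ℝ (insert 0 T))}

/-- A convex set with finitely many extreme points, one of which is the origin. -/
structure HasOriginVertex (P : Set E) : Prop where
  convex : Convex ℝ P
  finite_extremePoints : (P.extremePoints ℝ).Finite
  zero_mem_extremePoints : 0 ∈ P.extremePoints ℝ

variable {P T T' : Set E} {Q U U' : Set F}

theorem zero_notMem_of_linearIndepOn_id (hT : LinearIndepOn ℝ id T) : (0 : E) ∉ T := by
  simpa using hT.zero_notMem_image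

theorem affineIndependent_insert_zero_of_linearIndepOn_id (hT : LinearIndepOn ℝ id T) :
    AffineIndependent ℝ ((↑) : ↥(insert 0 T) → E) :=
  (affineIndependent_insert_zero_iff (zero_notMem_of_linearIndepOn_id hT)).2 hT

theorem zero_notMem_convexHull_of_linearIndepOn_id (hT : LinearIndepOn ℝ id T) :
    (0 : E) ∉ convexHull ℝ T := by
  intro h
  have h0 : (0 : E) ∈ (convexHull ℝ (insert 0 T)).extremePoints ℝ := by
    rw [extremePoints_convexHull_of_affineIndependent
      (affineIndependent_insert_zero_of_linearIndepOn_id hT)]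
    exact mem_insert 0 T
  exact zero_notMem_of_linearIndepOn_id hT <| extremePoints_convexHull_subset <|
    inter_extremePoints_subset_extremePoints_of_subset
      (convexHull_mono (subset_insert 0 T)) ⟨h, h0⟩

theorem originLink_subset_originDeletion : originLink P ⊆ originDeletion P :=
  fun T ⟨hT, hext⟩ ↦ ⟨hT, hext.trans <| isExtreme_convexHull_of_affineIndependent
    (affineIndependent_insert_zero_of_linearIndepOn_id hT) (subset_insert 0 T)⟩

theorem originDeletion_subset_simplexFaces : originDeletion P ⊆ simplexFaces P :=
  fun T ⟨hT, hext⟩ ↦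
    ⟨(affineIndependent_insert_zero_of_linearIndepOn_id hT).mono (subset_insert 0 T), hext⟩

theorem subset_extremePoints_of_mem_simplexFaces (hT : T ∈ simplexFaces P) :
    T ⊆ P.extremePoints ℝ := by
  rw [← extremePoints_convexHull_of_affineIndependent hT.1]
  exact hT.2.extremePoints_subset_extremePoints

theorem zero_notMem_of_mem_originDeletion (hT : T ∈ originDeletion P) : (0 : E) ∉ T :=
  zero_notMem_of_linearIndepOn_id hT.1

theorem zero_notMem_of_mem_originLink (hT : T ∈ originLink P) : (0 : E) ∉ T :=
  zero_notMem_of_linearIndepOn_id hT.1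

theorem mem_of_mem_originLink_of_mem_extremePoints {x : E} (hT : T ∈ originLink P)
    (hx : x ∈ P.extremePoints ℝ) (hxT : x ∈ convexHull ℝ (insert 0 T)) (hx0 : x ≠ 0) : x ∈ T :=
  (extremePoints_convexHull_subset <| inter_extremePoints_subset_extremePoints_of_subset
    hT.2.subset ⟨hxT, hx⟩).resolve_left hx0

theorem HasOriginVertex.zero_mem (hP : HasOriginVertex P) : (0 : E) ∈ P :=
  hP.zero_mem_extremePoints.1

theorem finite_simplexFaces (hP : (P.extremePoints ℝ).Finite) : (simplexFaces P).Finite :=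
  hP.finite_subsets.subset fun _ ↦ subset_extremePoints_of_mem_simplexFaces

theorem HasOriginVertex.finite_originDeletion (hP : HasOriginVertex P) :
    (originDeletion P).Finite :=
  (finite_simplexFaces hP.finite_extremePoints).subset originDeletion_subset_simplexFaces

theorem HasOriginVertex.finite_originLink (hP : HasOriginVertex P) : (originLink P).Finite :=
  hP.finite_originDeletion.subset originLink_subset_originDeletion

theorem HasOriginVertex.finite_of_mem_originDeletion (hP : HasOriginVertex P)
    (hT : T ∈ originDeletion P) : T.Finite :=
  hP.finite_extremePoints.subset <|
    subset_extremePoints_of_mem_simplexFaces (originDeletion_subset_simplexFaces hT)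

theorem HasOriginVertex.finite_of_mem_originLink (hP : HasOriginVertex P)
    (hT : T ∈ originLink P) : T.Finite :=
  hP.finite_of_mem_originDeletion (originLink_subset_originDeletion hT)

theorem insert_zero_mem_simplexFaces (hT : T ∈ originLink P) : insert 0 T ∈ simplexFaces P :=
  ⟨affineIndependent_insert_zero_of_linearIndepOn_id hT.1, hT.2⟩

theorem HasOriginVertex.simplexFaces_eq (hP : HasOriginVertex P) :
    simplexFaces P = originDeletion P ∪ insert 0 '' originLink P := by
  refine Subset.antisymm (fun T ⟨hT, hext⟩ ↦ ?_) (union_subset originDeletion_subset_simplexFaces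
    (image_subset_iff.2 fun _ ↦ insert_zero_mem_simplexFaces))
  by_cases h0 : (0 : E) ∈ T
  · have hinsert : insert 0 (T \ {0}) = T := insert_sdiff_self_of_mem h0
    refine .inr ⟨T \ {0}, ⟨?_, by rwa [hinsert]⟩, hinsert⟩
    rwa [← affineIndependent_insert_zero_iff fun h ↦ h.2 rfl, hinsert]
  · refine .inl ⟨linearIndepOn_id_of_isExtreme hP.convex hP.zero_mem hT hext fun h ↦ h0 ?_, hext⟩
    exact extremePoints_convexHull_subset <|
      inter_extremePoints_subset_extremePoints_of_subset hext.subset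
        ⟨h, hP.zero_mem_extremePoints⟩

theorem finite_wedge (hT : T.Finite) (hU : U.Finite) : (wedge T U).Finite :=
  (hT.image _).union (hU.image _)

theorem ncard_wedge (hT : T.Finite) (hU : U.Finite) (h0 : (0 : E) ∉ T) :
    (wedge T U).ncard = T.ncard + U.ncard := by
  rw [wedge, ncard_union_eq _ (hT.image _) (hU.image _),
    ncard_image_of_injective _ LinearMap.inl_injective,
    ncard_image_of_injective _ LinearMap.inr_injective]
  rw [disjoint_left]
  rintro _ ⟨x, hx, rfl⟩ ⟨y, -, hy⟩
  obtain rfl : 0 = x := congrArg Prod.fst hy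
  exact h0 hx

theorem wedge_subset_wedge_iff (h0T : (0 : E) ∉ T) (h0U : (0 : F) ∉ U) :
    wedge T U ⊆ wedge T' U' ↔ T ⊆ T' ∧ U ⊆ U' := by
  refine ⟨fun h ↦ ⟨fun x hx ↦ ?_, fun y hy ↦ ?_⟩,
    fun h ↦ union_subset_union (image_mono h.1) (image_mono h.2)⟩
  · obtain h | h := mem_wedge.1 (h (mem_wedge.2 (.inl ⟨hx, rfl⟩) : (x, (0 : F)) ∈ wedge T U))
    · exact h.1
    · exact absurd (h.1 ▸ hx) h0T
  · obtain h | h := mem_wedge.1 (h (mem_wedge.2 (.inr ⟨rfl, hy⟩) : ((0 : E), y) ∈ wedge T U))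
    · exact absurd (h.2 ▸ hy) h0U
    · exact h.2

theorem wedge_injOn :
    {p : Set E × Set F | 0 ∉ p.1 ∧ 0 ∉ p.2}.InjOn fun p ↦ wedge p.1 p.2 := by
  rintro ⟨T, U⟩ ⟨hT, hU⟩ ⟨T', U'⟩ ⟨hT', hU'⟩ h
  obtain ⟨hTT', hUU'⟩ := (wedge_subset_wedge_iff hT hU).1 h.subset
  obtain ⟨hT'T, hU'U⟩ := (wedge_subset_wedge_iff hT' hU').1 h.superset
  exact Prod.ext (hTT'.antisymm hT'T) (hUU'.antisymm hU'U)

theorem exists_wedge_eq_of_subset_wedge {S : Set (E × F)} (hS : S ⊆ wedge T U) :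
    ∃ T' U', wedge T' U' = S := by
  refine ⟨LinearMap.inl ℝ E F ⁻¹' S, LinearMap.inr ℝ E F ⁻¹' S, ?_⟩
  rw [wedge, image_preimage_eq_inter_range, image_preimage_eq_inter_range,
    ← inter_union_distrib_left, inter_eq_left]
  exact hS.trans (union_subset_union (image_subset_range _ _) (image_subset_range _ _))

theorem linearIndepOn_id_wedge_iff :
    LinearIndepOn ℝ id (wedge T U) ↔ LinearIndepOn ℝ id T ∧ LinearIndepOn ℝ id U := by
  constructor
  · intro h
    exact ⟨((h.mono subset_union_left).comp_of_image LinearMap.inl_injective.injOn).of_comp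
        (LinearMap.inl ℝ E F),
      ((h.mono subset_union_right).comp_of_image LinearMap.inr_injective.injOn).of_comp
        (LinearMap.inr ℝ E F)⟩
  · exact fun h ↦ LinearIndependent.inl_union_inr h.1 h.2

theorem hasOriginVertex_join (hP : HasOriginVertex P) (hQ : HasOriginVertex Q) :
    HasOriginVertex (join P Q) where
  convex := convex_convexHull ℝ _
  finite_extremePoints :=
    (finite_wedge hP.finite_extremePoints hQ.finite_extremePoints).subset
      (extremePoints_join_subset hP.convex hQ.convex hP.zero_mem hQ.zero_mem)
  zero_mem_extremePoints :=
    (zero_mem_extremePoints_join_iff hP.convex hQ.convex hP.zero_mem hQ.zero_mem).2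
      ⟨hP.zero_mem_extremePoints, hQ.zero_mem_extremePoints⟩

theorem HasOriginVertex.wedge_mem_originDeletion_join_iff (hP : HasOriginVertex P)
    (hQ : HasOriginVertex Q) :
    wedge T U ∈ originDeletion (join P Q) ↔ T ∈ originDeletion P ∧ U ∈ originDeletion Q := by
  simp only [originDeletion, mem_ofPred_eq, linearIndepOn_id_wedge_iff]
  rw [and_and_and_comm]
  refine and_congr_right fun ⟨hT, hU⟩ ↦ ?_
  exact isExtreme_join_iff hP.convex hQ.convex hP.zero_mem hQ.zero_mem <|
    iff_of_false (zero_notMem_convexHull_of_linearIndepOn_id hT)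
      (zero_notMem_convexHull_of_linearIndepOn_id hU)

theorem HasOriginVertex.wedge_mem_originLink_join_iff (hP : HasOriginVertex P)
    (hQ : HasOriginVertex Q) :
    wedge T U ∈ originLink (join P Q) ↔ T ∈ originLink P ∧ U ∈ originLink Q := by
  have h0T := subset_convexHull ℝ _ (mem_insert 0 T)
  have h0U := subset_convexHull ℝ _ (mem_insert 0 U)
  have hface := isExtreme_join_iff hP.convex hQ.convex hP.zero_mem hQ.zero_mem (iff_of_true h0T h0U)
  simp only [originLink, mem_ofPred_eq, linearIndepOn_id_wedge_iff, ← wedge_insert_zero, hface,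
    and_and_and_comm]

theorem HasOriginVertex.exists_wedge_eq_of_mem_simplexFaces_join (hP : HasOriginVertex P)
    (hQ : HasOriginVertex Q) {S : Set (E × F)} (hS : S ∈ simplexFaces (join P Q)) :
    ∃ T U, wedge T U = S :=
  exists_wedge_eq_of_subset_wedge <| (subset_extremePoints_of_mem_simplexFaces hS).trans <|
    extremePoints_join_subset hP.convex hQ.convex hP.zero_mem hQ.zero_mem

theorem HasOriginVertex.originDeletion_join (hP : HasOriginVertex P) (hQ : HasOriginVertex Q) :
    originDeletion (join P Q) = image2 wedge (originDeletion P) (originDeletion Q) := by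
  ext S
  constructor
  · intro hS
    obtain ⟨T, U, rfl⟩ := hP.exists_wedge_eq_of_mem_simplexFaces_join hQ
      (originDeletion_subset_simplexFaces hS)
    obtain ⟨hT, hU⟩ := (hP.wedge_mem_originDeletion_join_iff hQ).1 hS
    exact mem_image2_of_mem hT hU
  · rintro ⟨T, hT, U, hU, rfl⟩
    exact (hP.wedge_mem_originDeletion_join_iff hQ).2 ⟨hT, hU⟩

theorem HasOriginVertex.originLink_join (hP : HasOriginVertex P) (hQ : HasOriginVertex Q) :
    originLink (join P Q) = image2 wedge (originLink P) (originLink Q) := by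
  ext S
  constructor
  · intro hS
    obtain ⟨T, U, rfl⟩ := hP.exists_wedge_eq_of_mem_simplexFaces_join hQ
      (originDeletion_subset_simplexFaces (originLink_subset_originDeletion hS))
    obtain ⟨hT, hU⟩ := (hP.wedge_mem_originLink_join_iff hQ).1 hS
    exact mem_image2_of_mem hT hU
  · rintro ⟨T, hT, U, hU, rfl⟩
    exact (hP.wedge_mem_originLink_join_iff hQ).2 ⟨hT, hU⟩

end VertexSets

section SizePolynomial

open Polynomial

variable {F : Type*} [AddCommGroup F] [Module ℝ F]

/-- The polynomials with nonnegative coefficients. -/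
def nonnegCoeff : Subsemiring ℤ[X] where
  carrier := {f | ∀ n, 0 ≤ f.coeff n}
  mul_mem' hf hg n := by
    rw [coeff_mul]
    exact Finset.sum_nonneg fun p _ ↦ mul_nonneg (hf p.1) (hg p.2)
  one_mem' n := by
    rw [coeff_one]
    positivity
  add_mem' hf hg n := by
    rw [coeff_add]
    exact add_nonneg (hf n) (hg n)
  zero_mem' n := by rw [coeff_zero]

theorem X_mem_nonnegCoeff : (X : ℤ[X]) ∈ nonnegCoeff := fun n ↦ by
  rw [coeff_X]
  positivity

/-- The generating polynomial of a family of sets by cardinality. The polynomial of the simplex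
faces is `S_P`; those of the origin deletion and the origin link are `S¹_P` and `S⁰_P / X`. -/
noncomputable def sizePoly {V : Type*} (𝒯 : Set (Set V)) : ℤ[X] :=
  ∑ᶠ T ∈ 𝒯, X ^ T.ncard

variable {V W : Type*} {𝒯 𝒰 : Set (Set V)}

theorem sizePoly_mem_nonnegCoeff (𝒯 : Set (Set V)) : sizePoly 𝒯 ∈ nonnegCoeff :=
  finsum_mem_induction (· ∈ nonnegCoeff) (zero_mem _) (fun _ _ ↦ add_mem)
    fun T _ ↦ pow_mem X_mem_nonnegCoeff T.ncard

theorem coeff_sizePoly (h𝒯 : 𝒯.Finite) (n : ℕ) :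
    (sizePoly 𝒯).coeff n = {T ∈ 𝒯 | T.ncard = n}.ncard := by
  classical
  lift 𝒯 to Finset (Set V) using h𝒯
  rw [sizePoly, finsum_mem_coe_finset, finsetSum_coeff]
  simp only [coeff_X_pow, Finset.sum_boole, ← ncard_coe_finset, Finset.coe_filter, Finset.mem_coe,
    eq_comm]

theorem sizePoly_union (h𝒯 : 𝒯.Finite) (h𝒰 : 𝒰.Finite) (h : Disjoint 𝒯 𝒰) :
    sizePoly (𝒯 ∪ 𝒰) = sizePoly 𝒯 + sizePoly 𝒰 :=
  finsum_mem_union h h𝒯 h𝒰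

theorem sizePoly_sub_mem_nonnegCoeff (h𝒰 : 𝒰.Finite) (h : 𝒯 ⊆ 𝒰) :
    sizePoly 𝒰 - sizePoly 𝒯 ∈ nonnegCoeff := by
  rw [← union_sdiff_cancel h, sizePoly_union (h𝒰.subset h) h𝒰.sdiff disjoint_sdiff_right,
    add_sub_cancel_left]
  exact sizePoly_mem_nonnegCoeff _

theorem sizePoly_image_image {f : V → W} (hf : f.Injective) (𝒯 : Set (Set V)) :
    sizePoly (image f '' 𝒯) = sizePoly 𝒯 := by
  rw [sizePoly, finsum_mem_image hf.image_injective.injOn]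
  simp only [ncard_image_of_injective _ hf, sizePoly]

theorem sizePoly_insert_image {a : V} (hfin : ∀ T ∈ 𝒯, T.Finite)
    (ha : ∀ T ∈ 𝒯, a ∉ T) : sizePoly (insert a '' 𝒯) = X * sizePoly 𝒯 := by
  have hinj : InjOn (insert a) 𝒯 := fun T hT T' hT' h ↦ by
    rw [← insert_sdiff_self_of_notMem (ha T hT), h, insert_sdiff_self_of_notMem (ha T' hT')]
  rw [sizePoly, finsum_mem_image hinj, sizePoly, mul_finsum_mem]
  refine finsum_mem_congr rfl fun T hT ↦ ?_
  rw [ncard_insert_of_notMem (ha T hT) (hfin T hT), pow_succ']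

theorem sizePoly_image2_wedge {𝒯 : Set (Set E)} {𝒰 : Set (Set F)} (h𝒯 : 𝒯.Finite)
    (h𝒰 : 𝒰.Finite) (hfin𝒯 : ∀ T ∈ 𝒯, T.Finite) (hfin𝒰 : ∀ U ∈ 𝒰, U.Finite)
    (h0𝒯 : ∀ T ∈ 𝒯, 0 ∉ T) (h0𝒰 : ∀ U ∈ 𝒰, 0 ∉ U) :
    sizePoly (image2 wedge 𝒯 𝒰) = sizePoly 𝒯 * sizePoly 𝒰 := by
  have hinj : (𝒯 ×ˢ 𝒰).InjOn fun p ↦ wedge p.1 p.2 :=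
    fun p hp q hq ↦ wedge_injOn ⟨h0𝒯 _ hp.1, h0𝒰 _ hp.2⟩ ⟨h0𝒯 _ hq.1, h0𝒰 _ hq.2⟩
  rw [sizePoly, ← image_prod, finsum_mem_image hinj]
  lift 𝒯 to Finset (Set E) using h𝒯
  lift 𝒰 to Finset (Set F) using h𝒰
  rw [← Finset.coe_product, finsum_mem_coe_finset, Finset.sum_product, sizePoly, sizePoly,
    finsum_mem_coe_finset, finsum_mem_coe_finset, Finset.sum_mul_sum]
  refine Finset.sum_congr rfl fun T hT ↦ Finset.sum_congr rfl fun U hU ↦ ?_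
  rw [ncard_wedge (hfin𝒯 T hT) (hfin𝒰 U hU) (h0𝒯 T hT), pow_add]

variable {P : Set E} {Q : Set F}

theorem HasOriginVertex.sizePoly_simplexFaces (hP : HasOriginVertex P) :
    sizePoly (simplexFaces P) = sizePoly (originDeletion P) + X * sizePoly (originLink P) := by
  rw [hP.simplexFaces_eq, sizePoly_union hP.finite_originDeletion (hP.finite_originLink.image _),
    sizePoly_insert_image (fun _ ↦ hP.finite_of_mem_originLink)
      fun _ ↦ zero_notMem_of_mem_originLink]
  rw [disjoint_right]
  rintro _ ⟨T, -, rfl⟩ hT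
  exact zero_notMem_of_mem_originDeletion hT (mem_insert 0 T)

theorem HasOriginVertex.sizePoly_originDeletion_join (hP : HasOriginVertex P)
    (hQ : HasOriginVertex Q) : sizePoly (originDeletion (join P Q)) =
      sizePoly (originDeletion P) * sizePoly (originDeletion Q) := by
  rw [hP.originDeletion_join hQ]
  exact sizePoly_image2_wedge hP.finite_originDeletion hQ.finite_originDeletion
    (fun _ ↦ hP.finite_of_mem_originDeletion) (fun _ ↦ hQ.finite_of_mem_originDeletion)
    (fun _ ↦ zero_notMem_of_mem_originDeletion) (fun _ ↦ zero_notMem_of_mem_originDeletion)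

theorem HasOriginVertex.sizePoly_originLink_join (hP : HasOriginVertex P)
    (hQ : HasOriginVertex Q) : sizePoly (originLink (join P Q)) =
      sizePoly (originLink P) * sizePoly (originLink Q) := by
  rw [hP.originLink_join hQ]
  exact sizePoly_image2_wedge hP.finite_originLink hQ.finite_originLink
    (fun _ ↦ hP.finite_of_mem_originLink) (fun _ ↦ hQ.finite_of_mem_originLink)
    (fun _ ↦ zero_notMem_of_mem_originLink) (fun _ ↦ zero_notMem_of_mem_originLink)

/-- `S_{P ∨ Q} = S¹_P S¹_Q + S⁰_P S⁰_Q / X`. -/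
theorem HasOriginVertex.sizePoly_simplexFaces_join (hP : HasOriginVertex P)
    (hQ : HasOriginVertex Q) : sizePoly (simplexFaces (join P Q)) =
      sizePoly (originDeletion P) * sizePoly (originDeletion Q) +
        X * (sizePoly (originLink P) * sizePoly (originLink Q)) := by
  rw [(hasOriginVertex_join hP hQ).sizePoly_simplexFaces, hP.sizePoly_originDeletion_join hQ,
    hP.sizePoly_originLink_join hQ]

theorem HasOriginVertex.sizePoly_originDeletion_sub_originLink_mem (hP : HasOriginVertex P) :
    sizePoly (originDeletion P) - sizePoly (originLink P) ∈ nonnegCoeff :=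
  sizePoly_sub_mem_nonnegCoeff hP.finite_originDeletion originLink_subset_originDeletion

/-- If `0 ≤ α ≤ β ≤ γ` and `γ + x β ≤ δ + x α`, and likewise for the primed elements, then
`γ γ' + x β β' ≤ δ δ' + x α α'`, where `a ≤ b` means that `b - a` lies in a given subsemiring. -/
theorem mul_add_mul_mul_sub_mem {R : Type*} [CommRing R] {S : Subsemiring R}
    {x α β γ δ α' β' γ' δ' : R} (hx : x ∈ S) (hα : α ∈ S) (hβ' : β' ∈ S)
    (hαβ : β - α ∈ S) (hβγ : γ - β ∈ S) (h : δ + x * α - (γ + x * β) ∈ S)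
    (hαβ' : β' - α' ∈ S) (hβγ' : γ' - β' ∈ S) (h' : δ' + x * α' - (γ' + x * β') ∈ S) :
    δ * δ' + x * (α * α') - (γ * γ' + x * (β * β')) ∈ S := by
  have hγδ : δ - γ ∈ S := by
    convert add_mem h (mul_mem hx hαβ) using 1
    ring
  have hγδ' : δ' - γ' ∈ S := by
    convert add_mem h' (mul_mem hx hαβ') using 1
    ring
  have hαδ : δ - α ∈ S := by
    convert add_mem (add_mem hγδ hβγ) hαβ using 1
    ring
  have hsplit : δ * δ' + x * (α * α') - (γ * γ' + x * (β * β')) =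
      (δ + x * α - (γ + x * β)) * β' + α * (δ' + x * α' - (γ' + x * β')) +
        (δ - γ) * (γ' - β') + (δ - α) * (δ' - γ') := by ring
  rw [hsplit]
  exact add_mem (add_mem (add_mem (mul_mem h hβ') (mul_mem hα h')) (mul_mem hγδ hβγ'))
    (mul_mem hαδ hγδ')

theorem sizePoly_simplexFaces_join_sub_mem {E' F' : Type*} [AddCommGroup E'] [Module ℝ E']
    [AddCommGroup F'] [Module ℝ F'] {P' : Set E'} {Q' : Set F'} (hP : HasOriginVertex P)
    (hP' : HasOriginVertex P') (hQ : HasOriginVertex Q) (hQ' : HasOriginVertex Q')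
    (hlinkP : sizePoly (originLink P) - sizePoly (originLink P') ∈ nonnegCoeff)
    (hlinkQ : sizePoly (originLink Q) - sizePoly (originLink Q') ∈ nonnegCoeff)
    (hPP' : sizePoly (simplexFaces P') - sizePoly (simplexFaces P) ∈ nonnegCoeff)
    (hQQ' : sizePoly (simplexFaces Q') - sizePoly (simplexFaces Q) ∈ nonnegCoeff) :
    sizePoly (simplexFaces (join P' Q')) - sizePoly (simplexFaces (join P Q)) ∈ nonnegCoeff := by
  rw [hP.sizePoly_simplexFaces, hP'.sizePoly_simplexFaces] at hPP'
  rw [hQ.sizePoly_simplexFaces, hQ'.sizePoly_simplexFaces] at hQQ'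
  rw [hP.sizePoly_simplexFaces_join hQ, hP'.sizePoly_simplexFaces_join hQ']
  exact mul_add_mul_mul_sub_mem X_mem_nonnegCoeff (sizePoly_mem_nonnegCoeff _)
    (sizePoly_mem_nonnegCoeff _) hlinkP hP.sizePoly_originDeletion_sub_originLink_mem hPP'
    hlinkQ hQ.sizePoly_originDeletion_sub_originLink_mem hQQ'

end SizePolynomial

section SimplexCount

theorem neg_one_le_polyDim (P : Set E) : -1 ≤ polyDim P := by
  rw [polyDim]
  split_ifs
  · exact le_rfl
  · exact (neg_one_lt_zero.trans_le (Nat.cast_nonneg _)).le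

theorem simpCount_eq_zero_of_lt (P : Set E) {k : ℤ} (hk : k < -1) : simpCount P k = 0 := by
  have hempty : {G : Set E | IsFaceOf G P ∧ IsSimplex G ∧ polyDim G = k} = ∅ :=
    eq_empty_of_forall_notMem fun G hG ↦ ((neg_one_le_polyDim G).trans_eq hG.2.2).not_gt hk
  rw [simpCount, hempty, ncard_empty]

theorem affineIndependent_iff_ncard_eq {T : Set E} (hT : T.Finite) :
    AffineIndependent ℝ ((↑) : T → E) ↔ (T.ncard : ℤ) = polyDim (convexHull ℝ T) + 1 := by
  obtain rfl | hne := T.eq_empty_or_nonempty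
  · simp [polyDim, affineIndependent_of_subsingleton]
  have : Fintype T := hT.fintype
  obtain ⟨m, hm⟩ := Nat.exists_eq_add_one.2 ((ncard_pos hT).2 hne)
  have hcard : Fintype.card T = m + 1 := by
    rw [← hm, fintypeCard_eq_ncard]
  rw [affineIndependent_iff_finrank_vectorSpan_eq ℝ _ hcard, Subtype.range_coe, polyDim,
    if_neg (convexHull_nonempty_iff.2 hne).ne_empty, ← direction_affineSpan ℝ (convexHull ℝ T),
    affineSpan_convexHull, direction_affineSpan, hm]
  push_cast
  omega

variable {V W : Type*} [AddCommGroup V] [Module ℝ V] [TopologicalSpace V]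
  [IsTopologicalAddGroup V] [ContinuousSMul ℝ V] [LocallyConvexSpace ℝ V] [T2Space V]
  [AddCommGroup W] [Module ℝ W] [TopologicalSpace W]
  [IsTopologicalAddGroup W] [ContinuousSMul ℝ W] [LocallyConvexSpace ℝ W] [T2Space W]

theorem convexHull_extremePoints_convexHull {S : Set V} (hS : S.Finite) :
    convexHull ℝ ((convexHull ℝ S).extremePoints ℝ) = convexHull ℝ S := by
  have hfin := hS.subset (extremePoints_convexHull_subset (𝕜 := ℝ))
  rw [← (hfin.isClosed_convexHull ℝ).closure_eq]
  exact closure_convexHull_extremePoints (hS.isCompact_convexHull ℝ) (convex_convexHull ℝ S)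

theorem isSimplex_iff_exists_affineIndependent {G : Set V} :
    IsSimplex G ↔
      ∃ T : Set V, T.Finite ∧ AffineIndependent ℝ ((↑) : T → V) ∧ convexHull ℝ T = G := by
  constructor
  · rintro ⟨⟨S, rfl⟩, hcard⟩
    have hhull := convexHull_extremePoints_convexHull S.finite_toSet
    have hfin := S.finite_toSet.subset (extremePoints_convexHull_subset (𝕜 := ℝ))
    refine ⟨_, hfin, (affineIndependent_iff_ncard_eq hfin).2 ?_, hhull⟩
    rw [hhull]
    exact hcard
  · rintro ⟨T, hfin, hT, rfl⟩
    refine ⟨⟨hfin.toFinset, by rw [hfin.coe_toFinset]⟩, ?_⟩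
    rw [vertexCount, extremePoints_convexHull_of_affineIndependent hT,
      (affineIndependent_iff_ncard_eq hfin).1 hT]

theorem simpCount_eq_ncard {P : Set V} (hP : (P.extremePoints ℝ).Finite) (k : ℤ) :
    simpCount P k = {T ∈ simplexFaces P | (T.ncard : ℤ) = k + 1}.ncard := by
  have hinj : {T ∈ simplexFaces P | (T.ncard : ℤ) = k + 1}.InjOn (convexHull ℝ) := by
    intro T hT T' hT' h
    rw [← extremePoints_convexHull_of_affineIndependent hT.1.1, h,
      extremePoints_convexHull_of_affineIndependent hT'.1.1]
  rw [simpCount, ← hinj.ncard_image]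
  congr 1
  ext G
  constructor
  · rintro ⟨hface, hsimp, hdim⟩
    obtain ⟨T, hfin, hT, rfl⟩ := isSimplex_iff_exists_affineIndependent.1 hsimp
    exact ⟨T, ⟨⟨hT, hface⟩, by rw [← hdim, (affineIndependent_iff_ncard_eq hfin).1 hT]⟩, rfl⟩
  · rintro ⟨T, ⟨hT, hcard⟩, rfl⟩
    have hfin := hP.subset (subset_extremePoints_of_mem_simplexFaces hT)
    refine ⟨hT.2, isSimplex_iff_exists_affineIndependent.2 ⟨T, hfin, hT.1, rfl⟩, ?_⟩
    rw [(affineIndependent_iff_ncard_eq hfin).1 hT.1] at hcard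
    exact add_right_cancel hcard

theorem coeff_sizePoly_simplexFaces {P : Set V} (hP : (P.extremePoints ℝ).Finite) (n : ℕ) :
    (sizePoly (simplexFaces P)).coeff n = simpCount P (n - 1) := by
  rw [coeff_sizePoly (finite_simplexFaces hP), simpCount_eq_ncard hP]
  simp only [sub_add_cancel, Nat.cast_inj]

theorem forall_simpCount_le_iff {P : Set V} {Q : Set W} (hP : (P.extremePoints ℝ).Finite)
    (hQ : (Q.extremePoints ℝ).Finite) :
    (∀ k, simpCount P k ≤ simpCount Q k) ↔
      sizePoly (simplexFaces Q) - sizePoly (simplexFaces P) ∈ nonnegCoeff := by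
  have hcoeff (n : ℕ) : 0 ≤ (sizePoly (simplexFaces Q) - sizePoly (simplexFaces P)).coeff n ↔
      simpCount P (n - 1) ≤ simpCount Q (n - 1) := by
    rw [Polynomial.coeff_sub, sub_nonneg, coeff_sizePoly_simplexFaces hP,
      coeff_sizePoly_simplexFaces hQ, Nat.cast_le]
  refine ⟨fun h n ↦ (hcoeff n).2 (h _), fun h k ↦ ?_⟩
  obtain hk | hk := lt_or_ge k (-1)
  · rw [simpCount_eq_zero_of_lt P hk]
    exact Nat.zero_le _
  · obtain ⟨n, hn⟩ := Int.eq_ofNat_of_zero_le (by lia : 0 ≤ k + 1)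
    obtain rfl : k = n - 1 := by lia
    exact (hcoeff n).1 (h n)

end SimplexCount

section AffineInvariance

variable {F : Type*} [AddCommGroup F] [Module ℝ F]

theorem isExtreme_image_iff (φ : E ≃ᵃ[ℝ] F) {P G : Set E} :
    IsExtreme ℝ (φ '' P) (φ '' G) ↔ IsExtreme ℝ P G := by
  have hseg (x y z : E) : φ z ∈ openSegment ℝ (φ x) (φ y) ↔ z ∈ openSegment ℝ x y := by
    rw [← φ.injective.mem_set_image (s := openSegment ℝ x y)]
    exact iff_of_eq (congrArg (φ z ∈ ·) (image_openSegment ℝ φ.toAffineMap x y).symm)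
  simp only [isExtreme_iff, image_subset_image_iff φ.injective, forall_mem_image,
    φ.injective.mem_set_image, hseg]

theorem image_mem_simplexFaces_image_iff (φ : E ≃ᵃ[ℝ] F) {P T : Set E} :
    φ '' T ∈ simplexFaces (φ '' P) ↔ T ∈ simplexFaces P := by
  have hhull : φ '' convexHull ℝ T = convexHull ℝ (φ '' T) :=
    AffineMap.image_convexHull φ.toAffineMap T
  rw [simplexFaces, mem_ofPred_eq, ← hhull, isExtreme_image_iff,
    φ.affineIndependent_set_of_eq_iff]
  rfl

theorem simplexFaces_preimage (φ : E ≃ᵃ[ℝ] F) (Q : Set F) :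
    image φ '' simplexFaces (φ ⁻¹' Q) = simplexFaces Q := by
  ext U
  have hU : φ '' (φ ⁻¹' U) = U := image_preimage_eq U φ.surjective
  have hQ : φ '' (φ ⁻¹' Q) = Q := image_preimage_eq Q φ.surjective
  constructor
  · rintro ⟨T, hT, rfl⟩
    rwa [← hQ, image_mem_simplexFaces_image_iff]
  · intro h
    exact ⟨φ ⁻¹' U, by rwa [← image_mem_simplexFaces_image_iff φ, hU, hQ], hU⟩

theorem sizePoly_simplexFaces_preimage (φ : E ≃ᵃ[ℝ] F) (Q : Set F) :
    sizePoly (simplexFaces (φ ⁻¹' Q)) = sizePoly (simplexFaces Q) := by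
  rw [← simplexFaces_preimage φ Q, sizePoly_image_image φ.injective]

end AffineInvariance

section Polyhedron

/-- A polyhedron: the intersection of finitely many closed half-spaces `f x ≤ b`. -/
def IsPolyhedron (P : Set E) : Prop :=
  ∃ s : Set ((E →ₗ[ℝ] ℝ) × ℝ), s.Finite ∧ P = {x | ∀ h ∈ s, h.1 x ≤ h.2}

theorem isPolyhedron_setOf_le (f : E →ₗ[ℝ] ℝ) (b : ℝ) : IsPolyhedron {x | f x ≤ b} :=
  ⟨{(f, b)}, finite_singleton _, by simp⟩

theorem isPolyhedron_setOf_map_le_map (f g : E →ₗ[ℝ] ℝ) : IsPolyhedron {x | f x ≤ g x} := by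
  simpa using isPolyhedron_setOf_le (f - g) 0

theorem IsPolyhedron.inter {P Q : Set E} (hP : IsPolyhedron P) (hQ : IsPolyhedron Q) :
    IsPolyhedron (P ∩ Q) := by
  obtain ⟨s, hs, rfl⟩ := hP
  obtain ⟨t, ht, rfl⟩ := hQ
  refine ⟨s ∪ t, hs.union ht, ?_⟩
  ext x
  simp only [mem_inter_iff, mem_ofPred_eq, mem_union, or_imp, forall_and]

theorem isPolyhedron_iInter {ι : Sort*} [Finite ι] {P : ι → Set E}
    (hP : ∀ i, IsPolyhedron (P i)) : IsPolyhedron (⋂ i, P i) := by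
  choose s hs hPs using hP
  refine ⟨⋃ i, s i, finite_iUnion hs, ?_⟩
  ext x
  simp only [hPs, mem_iInter, mem_ofPred_eq, mem_iUnion, forall_exists_index]
  exact forall_comm

theorem IsPolyhedron.convex {P : Set E} (hP : IsPolyhedron P) : Convex ℝ P := by
  obtain ⟨s, -, rfl⟩ := hP
  simp only [ofPred_forall]
  exact convex_iInter₂ fun h _ ↦ convex_halfSpace_le h.1.isLinear h.2

theorem exists_pos_forall_map_add_smul_sub_le {s : Set ((E →ₗ[ℝ] ℝ) × ℝ)} (hs : s.Finite) {x y : E}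
    (hx : ∀ h ∈ s, h.1 x ≤ h.2) (hxy : ∀ h ∈ s, h.1 x = h.2 → h.1 y = h.2) :
    ∃ ε > (0 : ℝ), ∀ h ∈ s, h.1 (x + ε • (x - y)) ≤ h.2 := by
  have hsmall : ∀ h ∈ s, ∀ᶠ ε in nhdsWithin (0 : ℝ) (Ioi 0), h.1 (x + ε • (x - y)) ≤ h.2 := by
    intro h hh
    obtain hlt | heq := (hx h hh).lt_or_eq
    · have hcont : Continuous fun ε : ℝ ↦ h.1 (x + ε • (x - y)) := by
        simp only [map_add, map_smul]
        fun_prop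
      have hlim := (hcont.tendsto 0).mono_left (nhdsWithin_le_nhds (s := Ioi 0))
      rw [zero_smul, add_zero] at hlim
      exact (hlim.eventually_lt_const hlt).mono fun _ ↦ le_of_lt
    · exact .of_forall fun ε ↦ by simp [heq, hxy h hh heq]
  obtain ⟨ε, hε, hpos⟩ :=
    (((Filter.eventually_all_finite hs).2 hsmall).and self_mem_nhdsWithin).exists
  exact ⟨ε, hpos, hε⟩

/-- An extreme point is determined by the set of inequalities that it turns into equalities. -/
theorem IsPolyhedron.finite_extremePoints {P : Set E} (hP : IsPolyhedron P) :
    (P.extremePoints ℝ).Finite := by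
  obtain ⟨s, hs, rfl⟩ := hP
  refine Finite.of_injOn (f := fun x ↦ {h ∈ s | h.1 x = h.2})
    (fun x _ ↦ sep_subset s _) (fun x hx y hy hxy ↦ ?_) hs.finite_subsets
  have htight : ∀ h ∈ s, h.1 x = h.2 → h.1 y = h.2 :=
    fun h hh hhx ↦ (hxy.subset (⟨hh, hhx⟩ : h ∈ {h ∈ s | h.1 x = h.2})).2
  obtain ⟨ε, hε, hle⟩ := exists_pos_forall_map_add_smul_sub_le hs hx.1 htight
  refine (hx.2 hy.1 hle (mem_openSegment_iff_div.2 ⟨ε, 1, hε, one_pos, ?_⟩)).symm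
  have hne : ε + 1 ≠ 0 := by positivity
  match_scalars <;> field_simp <;> ring

theorem IsPolyhedron.hasOriginVertex {P : Set E} (hP : IsPolyhedron P)
    (h0 : 0 ∈ P.extremePoints ℝ) : HasOriginVertex P :=
  ⟨hP.convex, hP.finite_extremePoints, h0⟩

theorem zero_mem_extremePoints_of_nonneg [PartialOrder E] [IsOrderedAddMonoid E] [PosSMulMono ℝ E]
    {P : Set E} (h0 : 0 ∈ P) (hP : ∀ x ∈ P, 0 ≤ x) : 0 ∈ P.extremePoints ℝ := by
  refine ⟨h0, ?_⟩
  rintro x hx y hy ⟨a, b, ha, hb, -, hxy⟩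
  have hax := (add_eq_zero_iff_of_nonneg (smul_nonneg ha.le (hP x hx))
    (smul_nonneg hb.le (hP y hy))).1 hxy
  exact (smul_eq_zero_iff_right ha.ne').1 hax.1

end Polyhedron

section PosetPolytopes

variable {A : Type*} [PartialOrder A]

theorem zero_mem_orderPolytope : (0 : A → ℝ) ∈ orderPolytope A :=
  ⟨fun _ ↦ ⟨le_rfl, zero_le_one⟩, fun _ _ _ ↦ le_rfl⟩

theorem zero_mem_chainPolytope : (0 : A → ℝ) ∈ chainPolytope A :=
  ⟨fun _ ↦ le_rfl, fun s _ ↦ by simp⟩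

theorem isPolyhedron_orderPolytope [Finite A] : IsPolyhedron (orderPolytope A) := by
  simp only [orderPolytope, ofPred_and, ofPred_forall]
  refine .inter (isPolyhedron_iInter fun p ↦ .inter ?_ ?_)
    (isPolyhedron_iInter fun p ↦ isPolyhedron_iInter fun q ↦ isPolyhedron_iInter fun _ ↦ ?_)
  · simpa using isPolyhedron_setOf_le (-LinearMap.proj p : (A → ℝ) →ₗ[ℝ] ℝ) 0
  · exact isPolyhedron_setOf_le (LinearMap.proj p : (A → ℝ) →ₗ[ℝ] ℝ) 1
  · exact isPolyhedron_setOf_map_le_map (LinearMap.proj p : (A → ℝ) →ₗ[ℝ] ℝ) (LinearMap.proj q)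

theorem isPolyhedron_chainPolytope [Finite A] : IsPolyhedron (chainPolytope A) := by
  simp only [chainPolytope, ofPred_and, ofPred_forall]
  refine .inter (isPolyhedron_iInter fun p ↦ ?_)
    (isPolyhedron_iInter fun s ↦ isPolyhedron_iInter fun _ ↦ ?_)
  · simpa using isPolyhedron_setOf_le (-LinearMap.proj p : (A → ℝ) →ₗ[ℝ] ℝ) 0
  · simpa using isPolyhedron_setOf_le (∑ p ∈ s, LinearMap.proj p : (A → ℝ) →ₗ[ℝ] ℝ) 1

theorem hasOriginVertex_orderPolytope [Finite A] : HasOriginVertex (orderPolytope A) :=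
  isPolyhedron_orderPolytope.hasOriginVertex <|
    zero_mem_extremePoints_of_nonneg zero_mem_orderPolytope fun _ hx p ↦ (hx.1 p).1

theorem hasOriginVertex_chainPolytope [Finite A] : HasOriginVertex (chainPolytope A) :=
  isPolyhedron_chainPolytope.hasOriginVertex <|
    zero_mem_extremePoints_of_nonneg zero_mem_chainPolytope fun _ hx ↦ hx.1

theorem mk_mem_homogCone_orderPolytope_iff [Finite A] {s : ℝ} {x : A → ℝ} :
    (s, x) ∈ homogCone (orderPolytope A) ↔ 0 ≤ s ∧ (∀ p, 0 ≤ x p ∧ x p ≤ s) ∧ Monotone x := by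
  refine (and_iff_right_of_imp fst_nonneg_of_mem_homogCone).symm.trans
    (and_congr_right fun hs : 0 ≤ s ↦ ?_)
  obtain rfl | hs := hs.eq_or_lt
  · rw [mk_zero_mem_homogCone_iff]
    refine ⟨?_, fun h ↦ funext fun p ↦ (h.1 p).2.antisymm (h.1 p).1⟩
    rintro rfl
    exact ⟨fun _ ↦ ⟨le_rfl, le_rfl⟩, monotone_const⟩
  · rw [mk_mem_homogCone_iff_of_pos hs, isPolyhedron_orderPolytope.convex.convexHull_eq]
    simp [orderPolytope, Monotone, hs, inv_mul_le_iff₀]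

theorem mk_mem_homogCone_chainPolytope_iff [Finite A] {s : ℝ} {x : A → ℝ} :
    (s, x) ∈ homogCone (chainPolytope A) ↔ 0 ≤ s ∧ (∀ p, 0 ≤ x p) ∧
      ∀ c : Finset A, IsChain (· ≤ ·) (c : Set A) → ∑ p ∈ c, x p ≤ s := by
  refine (and_iff_right_of_imp fst_nonneg_of_mem_homogCone).symm.trans
    (and_congr_right fun hs : 0 ≤ s ↦ ?_)
  obtain rfl | hs := hs.eq_or_lt
  · rw [mk_zero_mem_homogCone_iff]
    refine ⟨?_, fun h ↦ funext fun p ↦ le_antisymm (by simpa using h.2 {p}) (h.1 p)⟩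
    rintro rfl
    exact ⟨fun _ ↦ le_rfl, fun c _ ↦ by simp⟩
  · rw [mk_mem_homogCone_iff_of_pos hs, isPolyhedron_chainPolytope.convex.convexHull_eq]
    simp [chainPolytope, ← Finset.mul_sum, hs, inv_mul_le_iff₀]

end PosetPolytopes

section OrdinalSum

variable {A B : Type*}

variable (A B) in
/-- Splitting of the coordinates indexed by an ordinal sum. -/
def ordinalSumSplit : ((A ⊕ₗ B) → ℝ) ≃ₗ[ℝ] (A → ℝ) × (B → ℝ) :=
  (LinearEquiv.funCongrLeft ℝ ℝ toLex).trans (LinearEquiv.sumArrowLequivProdArrow A B ℝ ℝ)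

variable (B) in
/-- The complementation `x ↦ 1 - x`, which reverses the order of the index set. -/
noncomputable def complementEquiv : (B → ℝ) ≃ᵃ[ℝ] (Bᵒᵈ → ℝ) :=
  (LinearEquiv.funCongrLeft ℝ ℝ OrderDual.ofDual).toAffineEquiv.trans (AffineEquiv.constVSub ℝ 1)

theorem complementEquiv_apply (x : B → ℝ) (b : Bᵒᵈ) :
    complementEquiv B x b = 1 - x (OrderDual.ofDual b) :=
  rfl

variable [PartialOrder A] [PartialOrder B]

theorem complementEquiv_preimage_orderPolytope :
    complementEquiv B ⁻¹' orderPolytope Bᵒᵈ = orderPolytope B := by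
  ext x
  simp only [mem_preimage, orderPolytope, mem_ofPred_eq, complementEquiv_apply,
    OrderDual.forall, OrderDual.ofDual_toDual, OrderDual.toDual_le_toDual, sub_nonneg,
    sub_le_self_iff, sub_le_sub_iff_left]
  exact and_congr (forall_congr' fun _ ↦ and_comm) forall_comm

theorem chainPolytope_orderDual : (chainPolytope Bᵒᵈ : Set (B → ℝ)) = chainPolytope B := by
  ext x
  refine and_congr_right fun _ ↦ forall_congr' fun c ↦ imp_congr_left ?_
  exact ⟨IsChain.symm, IsChain.symm⟩

theorem mem_orderPolytope_ordinalSum_iff {x : (A ⊕ₗ B) → ℝ} :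
    x ∈ orderPolytope (A ⊕ₗ B) ↔ x ∘ Sum.inlₗ ∈ orderPolytope A ∧
      x ∘ Sum.inrₗ ∈ orderPolytope B ∧ ∀ a b, x (Sum.inlₗ a) ≤ x (Sum.inrₗ b) := by
  simp only [orderPolytope, mem_ofPred_eq, Lex.forall, Sum.forall, Sum.Lex.toLex_le_toLex,
    Sum.lex_inl_inl, Sum.lex_inr_inr, Sum.lex_inr_inl, Sum.Lex.sep, Function.comp_apply]
  grind

theorem mk_complementEquiv_mem_homogCone_orderPolytope_iff [Finite B] {t : ℝ} {y : B → ℝ} :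
    (t, complementEquiv B y) ∈ homogCone (orderPolytope Bᵒᵈ) ↔
      0 ≤ t ∧ (∀ b, 1 - t ≤ y b ∧ y b ≤ 1) ∧ Monotone y := by
  rw [mk_mem_homogCone_orderPolytope_iff]
  simp only [Monotone, complementEquiv_apply, OrderDual.forall, OrderDual.ofDual_toDual,
    OrderDual.toDual_le_toDual, sub_nonneg, sub_le_sub_iff_left, sub_le_comm]
  grind

theorem orderPolytope_ordinalSum [Finite A] [Finite B] :
    (ordinalSumSplit A B).toAffineEquiv.trans
        ((AffineEquiv.refl ℝ (A → ℝ)).prodCongr (complementEquiv B)) ⁻¹'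
      join (orderPolytope A) (orderPolytope Bᵒᵈ) = orderPolytope (A ⊕ₗ B) := by
  ext x
  rw [mem_orderPolytope_ordinalSum_iff, mem_preimage, mem_join_iff]
  change (∃ s t : ℝ, s + t = 1 ∧ (s, x ∘ Sum.inlₗ) ∈ homogCone (orderPolytope A) ∧
    (t, complementEquiv B (x ∘ Sum.inrₗ)) ∈ homogCone (orderPolytope Bᵒᵈ)) ↔ _
  simp only [mk_complementEquiv_mem_homogCone_orderPolytope_iff]
  simp only [mk_mem_homogCone_orderPolytope_iff]
  constructor
  · rintro ⟨s, t, hst, ⟨hs, hA, hmonoA⟩, ht, hB, hmonoB⟩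
    refine ⟨⟨fun a ↦ ⟨(hA a).1, (hA a).2.trans ?_⟩, fun _ _ h ↦ hmonoA h⟩,
      ⟨fun b ↦ ⟨le_trans ?_ (hB b).1, (hB b).2⟩, fun _ _ h ↦ hmonoB h⟩,
      fun a b ↦ ((hA a).2.trans ?_).trans (hB b).1⟩ <;> linarith
  · rintro ⟨⟨hA, hmonoA⟩, ⟨hB, hmonoB⟩, hAB⟩
    obtain ⟨s, hs, hs'⟩ := exists_between_of_forall_le
      (insert_nonempty 0 (range (x ∘ Sum.inlₗ))) (insert_nonempty 1 (range (x ∘ Sum.inrₗ)))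
      (by grind)
    simp only [mem_upperBounds, mem_lowerBounds, forall_mem_insert, forall_mem_range] at hs hs'
    exact ⟨s, 1 - s, add_sub_cancel s 1, ⟨hs.1, fun a ↦ ⟨(hA a).1, hs.2 a⟩, fun _ _ ↦ hmonoA _ _⟩,
      sub_nonneg.2 hs'.1, fun b ↦ ⟨by simpa using hs'.2 b, (hB b).2⟩, fun _ _ ↦ hmonoB _ _⟩

theorem isChain_map_toLex_disjSum_iff {c : Finset A} {d : Finset B} :
    IsChain (· ≤ ·) ((c.disjSum d).map toLex.toEmbedding : Set (A ⊕ₗ B)) ↔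
      IsChain (· ≤ ·) (c : Set A) ∧ IsChain (· ≤ ·) (d : Set B) := by
  simp [IsChain, Set.Pairwise, Sum.forall]

theorem mem_chainPolytope_ordinalSum_iff {x : (A ⊕ₗ B) → ℝ} :
    x ∈ chainPolytope (A ⊕ₗ B) ↔ (∀ a, 0 ≤ x (Sum.inlₗ a)) ∧ (∀ b, 0 ≤ x (Sum.inrₗ b)) ∧
      ∀ (c : Finset A) (d : Finset B), IsChain (· ≤ ·) (c : Set A) → IsChain (· ≤ ·) (d : Set B) →
        ∑ a ∈ c, x (Sum.inlₗ a) + ∑ b ∈ d, x (Sum.inrₗ b) ≤ 1 := by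
  simp only [chainPolytope, mem_ofPred_eq, Lex.forall, Sum.forall]
  rw [and_assoc]
  refine and_congr_right fun _ ↦ and_congr_right fun _ ↦ ?_
  constructor
  · intro h c d hc hd
    simpa [Finset.sum_map, Finset.sum_disjSum] using h _ (isChain_map_toLex_disjSum_iff.2 ⟨hc, hd⟩)
  · intro h s hs
    obtain ⟨c, d, rfl⟩ : ∃ c d, (Finset.disjSum c d).map toLex.toEmbedding = s :=
      ⟨(s.map ofLex.toEmbedding).toLeft, (s.map ofLex.toEmbedding).toRight, by
        rw [Finset.toLeft_disjSum_toRight]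
        ext
        simp⟩
    obtain ⟨hc, hd⟩ := isChain_map_toLex_disjSum_iff.1 hs
    simpa [Finset.sum_map, Finset.sum_disjSum] using h c d hc hd

theorem chainPolytope_ordinalSum [Finite A] [Finite B] :
    (ordinalSumSplit A B).toAffineEquiv ⁻¹' join (chainPolytope A) (chainPolytope B) =
      chainPolytope (A ⊕ₗ B) := by
  ext x
  rw [mem_chainPolytope_ordinalSum_iff, mem_preimage, mem_join_iff]
  change (∃ s t : ℝ, s + t = 1 ∧ (s, x ∘ Sum.inlₗ) ∈ homogCone (chainPolytope A) ∧
    (t, x ∘ Sum.inrₗ) ∈ homogCone (chainPolytope B)) ↔ _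
  simp only [mk_mem_homogCone_chainPolytope_iff, Function.comp_apply]
  constructor
  · rintro ⟨s, t, hst, ⟨-, hA, hsumA⟩, -, hB, hsumB⟩
    exact ⟨hA, hB, fun c d hc hd ↦ hst ▸ add_le_add (hsumA c hc) (hsumB d hd)⟩
  · rintro ⟨hA, hB, hsum⟩
    obtain ⟨s, hs, hs'⟩ := exists_between_of_forall_le
      (s := (fun c : Finset A ↦ ∑ a ∈ c, x (Sum.inlₗ a)) '' {c | IsChain (· ≤ ·) (c : Set A)})
      (t := (fun d : Finset B ↦ 1 - ∑ b ∈ d, x (Sum.inrₗ b)) '' {d | IsChain (· ≤ ·) (d : Set B)})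
      (.image _ ⟨∅, by simp⟩) (.image _ ⟨∅, by simp⟩)
      (by
        rintro _ ⟨c, hc, rfl⟩ _ ⟨d, hd, rfl⟩
        exact le_sub_iff_add_le.2 (hsum c d hc hd))
    simp only [mem_upperBounds, mem_lowerBounds, forall_mem_image] at hs hs'
    have hs0 : 0 ≤ s := by simpa using hs (x := ∅) (by simp)
    have hs1 : s ≤ 1 := by simpa using hs' (x := ∅) (by simp)
    exact ⟨s, 1 - s, add_sub_cancel s 1, ⟨hs0, hA, fun c hc ↦ hs hc⟩, sub_nonneg.2 hs1, hB,
      fun d hd ↦ le_sub_comm.1 (hs' hd)⟩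

end OrdinalSum

section CharacteristicVectors

variable {α : Type*} {S : Set α} {p : α}

theorem chi_of_mem (h : p ∈ S) : chi S p = 1 :=
  if_pos h

theorem chi_of_notMem (h : p ∉ S) : chi S p = 0 :=
  if_neg h

theorem chi_injective : (chi : Set α → α → ℝ).Injective := by
  intro S S' h
  ext p
  have := congrFun h p
  by_cases hp : p ∈ S <;> by_cases hp' : p ∈ S' <;> simp_all [chi]

theorem chi_mem_Icc (S : Set α) : chi S ∈ Icc (0 : α → ℝ) 1 := by
  constructor <;> intro p <;> by_cases hp : p ∈ S <;> simp [chi, hp]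

theorem chi_mem_extremePoints_of_subset_Icc {P : Set (α → ℝ)} (hP : P ⊆ Icc 0 1) (hS : chi S ∈ P) :
    chi S ∈ P.extremePoints ℝ := by
  refine inter_extremePoints_subset_extremePoints_of_subset hP ⟨hS, ?_⟩
  rw [← pi_univ_Icc, extremePoints_pi]
  intro p _
  change chi S p ∈ (Icc (0 : ℝ) 1).extremePoints ℝ
  rw [extremePoints_Icc zero_le_one]
  by_cases hp : p ∈ S
  · exact .inr (chi_of_mem hp)
  · exact .inl (chi_of_notMem hp)

end CharacteristicVectors

section ChainPolytopeLink

variable {A : Type*} [PartialOrder A]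

theorem chainPolytope_subset_Icc : chainPolytope A ⊆ Icc 0 1 :=
  fun x hx ↦ ⟨hx.1, fun p ↦ by simpa using hx.2 {p} (by simp)⟩

theorem mem_chainPolytope_of_le {x y : A → ℝ} (hx : x ∈ chainPolytope A) (hy : 0 ≤ y)
    (hyx : y ≤ x) : y ∈ chainPolytope A :=
  ⟨hy, fun c hc ↦ (Finset.sum_le_sum fun p _ ↦ hyx p).trans (hx.2 c hc)⟩

theorem chi_mem_chainPolytope {S : Set A} (hS : IsAntichain (· ≤ ·) S) :
    chi S ∈ chainPolytope A := by
  classical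
  refine ⟨(chi_mem_Icc S).1, fun c hc ↦ ?_⟩
  have hcard : (c.filter (· ∈ S)).card ≤ 1 := by
    refine Finset.card_le_one.2 fun p hp q hq ↦ ?_
    rw [Finset.mem_filter] at hp hq
    exact inter_subsingleton_of_isChain_of_isAntichain hc hS hp hq
  simpa [chi, Finset.sum_boole] using hcard

theorem mem_of_mem_originLink_chainPolytope {S : Set A} {T : Set (A → ℝ)}
    (hT : T ∈ originLink (chainPolytope A)) (hS : IsAntichain (· ≤ ·) S) (hne : S.Nonempty)
    (hST : chi S ∈ convexHull ℝ (insert 0 T)) : chi S ∈ T := by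
  refine mem_of_mem_originLink_of_mem_extremePoints hT
    (chi_mem_extremePoints_of_subset_Icc chainPolytope_subset_Icc (chi_mem_chainPolytope hS)) hST ?_
  obtain ⟨p, hp⟩ := hne
  exact fun h ↦ by simpa [chi_of_mem hp] using congrFun h p

theorem chi_singleton_mem_of_mem_originLink_chainPolytope [Finite A] {T : Set (A → ℝ)}
    (hT : T ∈ originLink (chainPolytope A)) {t : A → ℝ} (ht : t ∈ T) {p : A} (hp : t p ≠ 0) :
    chi {p} ∈ T := by
  have h0 : 0 ∈ convexHull ℝ (insert 0 T) := subset_convexHull ℝ _ (mem_insert 0 T)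
  have htT : t ∈ convexHull ℝ (insert 0 T) := subset_convexHull ℝ _ (mem_insert_of_mem 0 ht)
  have htC := hT.2.subset htT
  have hanti : IsAntichain (· ≤ ·) {p} := subsingleton_singleton.isAntichain _
  refine mem_of_mem_originLink_chainPolytope hT hanti (singleton_nonempty p) <|
    mem_convexHull_of_add_smul_mem isPolyhedron_chainPolytope.convex hT.2 h0
      (chi_mem_chainPolytope hanti) (y := t - t p • chi {p}) ?_ ((htC.1 p).lt_of_ne' hp) (by simpa)
  refine mem_chainPolytope_of_le htC (fun q ↦ ?_)
    (sub_le_self t (smul_nonneg (htC.1 p) (chi_mem_Icc {p}).1))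
  obtain rfl | hq := eq_or_ne q p
  · simp [chi_of_mem]
  · simp [chi_of_notMem, hq, htC.1 q]

theorem eq_image_chi_of_mem_originLink_chainPolytope [Finite A] {T : Set (A → ℝ)}
    (hT : T ∈ originLink (chainPolytope A)) :
    T = (fun p ↦ chi {p}) '' {p | chi {p} ∈ T} := by
  classical
  cases nonempty_fintype A
  refine (eq_of_linearIndepOn_id_of_span_subtype hT.1 (image_subset_iff.2 fun _ ↦ id) fun t ht ↦ ?_)
  have hsum : t = ∑ p, t p • chi {p} := by
    ext q
    simp [chi]
  rw [hsum]
  refine sum_mem fun p _ ↦ ?_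
  obtain hp | hp := eq_or_ne (t p) 0
  · simp [hp]
  · exact Submodule.smul_mem _ _ <| Submodule.subset_span <|
      mem_image_of_mem _ (chi_singleton_mem_of_mem_originLink_chainPolytope hT ht hp)

theorem isChain_of_mem_originLink_chainPolytope [Finite A] {T : Set (A → ℝ)}
    (hT : T ∈ originLink (chainPolytope A)) : IsChain (· ≤ ·) {p | chi {p} ∈ T} := by
  intro p (hpT : chi {p} ∈ T) q (hqT : chi {q} ∈ T) hpq
  by_contra! hinc
  have hanti : IsAntichain (· ≤ ·) {p, q} := by
    simp [IsAntichain, Set.Pairwise, hinc]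
  have hsum : chi {p, q} = chi {p} + chi {q} := by
    ext r
    by_cases hrp : r = p <;> by_cases hrq : r = q <;> simp_all [chi]
  have hmid : (1 / 2 : ℝ) • chi {p, q} + 0 ∈ convexHull ℝ (insert 0 T) := by
    rw [hsum, add_zero, smul_add]
    exact convex_convexHull ℝ _ (subset_convexHull ℝ _ (mem_insert_of_mem 0 hpT))
      (subset_convexHull ℝ _ (mem_insert_of_mem 0 hqT)) (by norm_num) (by norm_num) (by norm_num)
  have hpqT : chi {p, q} ∈ T :=
    mem_of_mem_originLink_chainPolytope hT hanti (insert_nonempty p _) <|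
      mem_convexHull_of_add_smul_mem isPolyhedron_chainPolytope.convex hT.2
        (subset_convexHull ℝ _ (mem_insert 0 T)) (chi_mem_chainPolytope hanti)
        zero_mem_chainPolytope one_half_pos hmid
  rw [eq_image_chi_of_mem_originLink_chainPolytope hT] at hpqT
  obtain ⟨r, -, hr⟩ := hpqT
  have hr := chi_injective hr
  exact hpq ((hr.superset (mem_insert p _)).trans (hr.superset (mem_insert_of_mem p rfl)).symm)

theorem originLink_chainPolytope_subset [Finite A] :
    originLink (chainPolytope A) ⊆ image (fun p ↦ chi {p}) '' {S | IsChain (· ≤ ·) S} :=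
  fun _ hT ↦ ⟨_, isChain_of_mem_originLink_chainPolytope hT,
    (eq_image_chi_of_mem_originLink_chainPolytope hT).symm⟩

end ChainPolytopeLink

section OrderPolytopeLink

variable {A : Type*} [PartialOrder A] {S : Set A} {p : A}

@[elab_as_elim]
theorem isChain_induction_insert_lt {motive : Set A → Prop} (hfin : S.Finite)
    (hS : IsChain (· ≤ ·) S) (empty : motive ∅)
    (insert : ∀ p S, (∀ q ∈ S, p < q) → motive S → motive (insert p S)) : motive S := by
  classical
  lift S to Finset A using hfin
  induction S using Finset.strongInduction with
  | H S ih =>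
    obtain rfl | hne := S.eq_empty_or_nonempty
    · simpa using empty
    obtain ⟨p, hp⟩ := S.exists_minimal hne
    rw [← Finset.insert_erase hp.prop, Finset.coe_insert]
    refine insert p _ (fun q hq ↦ ?_) <| ih _ (Finset.erase_ssubset hp.prop) <|
      hS.mono (S.erase_subset p)
    obtain ⟨hqp, hqS⟩ := Finset.mem_erase.1 hq
    exact ((hS.total hp.prop hqS).elim id (hp.le_of_le hqS)).lt_of_ne' hqp

theorem chi_Ici_mem_orderPolytope (p : A) : chi (Ici p) ∈ orderPolytope A := by
  refine ⟨fun q ↦ ⟨(chi_mem_Icc _).1 q, (chi_mem_Icc _).2 q⟩, fun q r hqr ↦ ?_⟩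
  by_cases hq : q ∈ Ici p
  · rw [chi_of_mem hq, chi_of_mem (mem_Ici.2 (le_trans hq hqr))]
  · rw [chi_of_notMem hq]
    exact (chi_mem_Icc _).1 r

theorem apply_eq_zero_of_mem_span_image_chi_Ici {x : A → ℝ}
    (hx : x ∈ Submodule.span ℝ ((fun p ↦ chi (Ici p)) '' S)) (hp : ∀ q ∈ S, ¬ q ≤ p) : x p = 0 := by
  suffices Submodule.span ℝ ((fun p ↦ chi (Ici p)) '' S) ≤ LinearMap.ker (LinearMap.proj p) from
    this hx
  rw [Submodule.span_le, image_subset_iff]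
  exact fun q hq ↦ chi_of_notMem (hp q hq)

theorem linearIndepOn_image_chi_Ici (hfin : S.Finite) (hS : IsChain (· ≤ ·) S) :
    LinearIndepOn ℝ id ((fun p ↦ chi (Ici p)) '' S) := by
  refine isChain_induction_insert_lt hfin hS (by simp) fun p S hp ih ↦ ?_
  rw [image_insert_eq]
  refine ih.id_insert fun h ↦ one_ne_zero (α := ℝ) ?_
  rw [← apply_eq_zero_of_mem_span_image_chi_Ici h fun q hq ↦ (hp q hq).not_ge,
    chi_of_mem self_mem_Ici]

theorem sub_apply_smul_chi_Ici_mem_homogCone_orderPolytope [Finite A] {z : ℝ × (A → ℝ)}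
    (hz : z ∈ homogCone (orderPolytope A)) (hp : ∀ q, ¬ p ≤ q → z.2 q = 0) :
    z - z.2 p • (1, chi (Ici p)) ∈ homogCone (orderPolytope A) := by
  classical
  obtain ⟨s, x⟩ := z
  obtain ⟨-, hx, hmono⟩ := mk_mem_homogCone_orderPolytope_iff.1 hz
  have hval (q) : (x - x p • chi (Ici p)) q = if p ≤ q then x q - x p else 0 := by
    by_cases hq : p ≤ q
    · simp [chi, hq]
    · simpa [chi, hq] using hp q hq
  have hsub : (s, x) - x p • (1, chi (Ici p)) = (s - x p, x - x p • chi (Ici p)) := by simp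
  rw [hsub, mk_mem_homogCone_orderPolytope_iff]
  refine ⟨sub_nonneg.2 (hx p).2, fun q ↦ ?_, fun q r hqr ↦ ?_⟩
  · rw [hval]
    split_ifs with hq
    · exact ⟨sub_nonneg.2 (hmono hq), sub_le_sub_right (hx q).2 _⟩
    · exact ⟨le_rfl, sub_nonneg.2 (hx p).2⟩
  · rw [hval, hval]
    split_ifs with hq hr hr
    · exact sub_le_sub_right (hmono hqr) _
    · exact absurd (hq.trans hqr) hr
    · exact sub_nonneg.2 (hmono hr)
    · exact le_rfl

theorem apply_eq_zero_of_add_mem_homogCone_image_chi_Ici [Finite A] {z w : ℝ × (A → ℝ)}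
    (hz : z ∈ homogCone (orderPolytope A)) (hw : w ∈ homogCone (orderPolytope A))
    (hzw : z + w ∈ homogCone (insert 0 ((fun p ↦ chi (Ici p)) '' S))) (hp : ∀ q ∈ S, ¬ q ≤ p) :
    z.2 p = 0 := by
  have hspan := snd_mem_span_of_mem_homogCone hzw
  rw [Submodule.span_insert_zero] at hspan
  have hsum := apply_eq_zero_of_mem_span_image_chi_Ici hspan hp
  exact ((add_eq_zero_iff_of_nonneg ((mk_mem_homogCone_orderPolytope_iff.1 hz).2.1 p).1
    ((mk_mem_homogCone_orderPolytope_iff.1 hw).2.1 p).1).1 hsum).1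

/-- Induction on the chain: for the least element `p`, the coefficient of `(1, chi (Ici p))` in
`z + w` is the coordinate at `p`, so this multiple can be split off from `z` and `w` separately. -/
theorem mem_homogCone_image_chi_Ici_of_add_mem [Finite A] (hS : IsChain (· ≤ ·) S)
    (z w : ℝ × (A → ℝ)) (hz : z ∈ homogCone (orderPolytope A))
    (hw : w ∈ homogCone (orderPolytope A))
    (hzw : z + w ∈ homogCone (insert 0 ((fun p ↦ chi (Ici p)) '' S))) :
    z ∈ homogCone (insert 0 ((fun p ↦ chi (Ici p)) '' S)) := by
  revert z w
  refine isChain_induction_insert_lt S.toFinite hS ?_ ?_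
  · intro z w hz hw hzw
    have hz0 : z.2 = 0 := funext fun q ↦
      apply_eq_zero_of_add_mem_homogCone_image_chi_Ici hz hw hzw (by simp)
    rw [← Prod.mk.eta (p := z), hz0]
    exact mk_mem_homogCone_of_le (subset_convexHull ℝ _ (mem_insert 0 _)) (zero_mem _)
      (fst_nonneg_of_mem_homogCone hz)
  · intro p S hp ih z w hz hw hzw
    have hge : ∀ q, ¬ p ≤ q → ∀ r ∈ insert p S, ¬ r ≤ q := by
      rintro q hq r (rfl | hr) hrq
      exacts [hq hrq, hq ((hp r hr).le.trans hrq)]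
    have hz' := sub_apply_smul_chi_Ici_mem_homogCone_orderPolytope hz fun q hq ↦
      apply_eq_zero_of_add_mem_homogCone_image_chi_Ici hz hw hzw (hge q hq)
    have hw' := sub_apply_smul_chi_Ici_mem_homogCone_orderPolytope hw fun q hq ↦
      apply_eq_zero_of_add_mem_homogCone_image_chi_Ici hw hz (add_comm z w ▸ hzw) (hge q hq)
    rw [image_insert_eq, insert_comm, mem_homogCone_insert_iff] at hzw ⊢
    obtain ⟨a, -, hv⟩ := hzw
    have hspan := snd_mem_span_of_mem_homogCone hv
    rw [Submodule.span_insert_zero] at hspan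
    have hcoeff : z.2 p + w.2 p - a = 0 := by
      simpa [chi_of_mem] using
        apply_eq_zero_of_mem_span_image_chi_Ici hspan fun q hq ↦ (hp q hq).not_ge
    refine ⟨z.2 p, ((mk_mem_homogCone_orderPolytope_iff.1 hz).2.1 p).1, ih _ _ hz' hw' ?_⟩
    rwa [sub_add_sub_comm, ← add_smul, sub_eq_zero.1 hcoeff]

theorem image_chi_Ici_mem_originLink_orderPolytope [Finite A] (hS : IsChain (· ≤ ·) S) :
    (fun p ↦ chi (Ici p)) '' S ∈ originLink (orderPolytope A) := by
  refine ⟨linearIndepOn_image_chi_Ici S.toFinite hS,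
    (isFaceOf_homogCone_iff isPolyhedron_orderPolytope.convex).1 <| .of_mem_of_add_mem_left
      (homogCone_mono ?_) (mem_homogCone_image_chi_Ici_of_add_mem hS _ _)⟩
  exact insert_subset zero_mem_orderPolytope (image_subset_iff.2 fun p _ ↦
    chi_Ici_mem_orderPolytope p)

end OrderPolytopeLink

section LinkComparison

variable {A : Type*} [PartialOrder A] [Finite A]

theorem sizePoly_originLink_orderPolytope_sub_mem :
    sizePoly (originLink (orderPolytope A)) - sizePoly (originLink (chainPolytope A)) ∈
      nonnegCoeff := by
  set chains : Set (Set A) := {S | IsChain (· ≤ ·) S}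
  have hchain := sizePoly_sub_mem_nonnegCoeff (toFinite (image (fun p ↦ chi {p}) '' chains))
    originLink_chainPolytope_subset
  have horder := sizePoly_sub_mem_nonnegCoeff
    (𝒯 := image (fun p ↦ chi (Ici p)) '' chains) hasOriginVertex_orderPolytope.finite_originLink
    (image_subset_iff.2 fun S hS ↦ image_chi_Ici_mem_originLink_orderPolytope hS)
  have hsingle : (fun p : A ↦ chi {p}).Injective := chi_injective.comp singleton_injective
  have hfilter : (fun p : A ↦ chi (Ici p)).Injective := chi_injective.comp Ici_injective
  rw [sizePoly_image_image hsingle] at hchain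
  rw [sizePoly_image_image hfilter] at horder
  simpa using add_mem horder hchain

end LinkComparison

/-- the simplex-count inequality between order and chain polytopes is
preserved by ordinal sums of posets (here the lexicographic sum `A ⊕ₗ B`). -/
theorem ordinal_sum_simpCount_ineq (A B : Type*) [Fintype A] [PartialOrder A]
    [Fintype B] [PartialOrder B]
    (hA : ∀ k : ℤ, simpCount (orderPolytope A) k ≤ simpCount (chainPolytope A) k)
    (hB : ∀ k : ℤ, simpCount (orderPolytope B) k ≤ simpCount (chainPolytope B) k) :
    ∀ k : ℤ, simpCount (orderPolytope (A ⊕ₗ B)) k ≤ simpCount (chainPolytope (A ⊕ₗ B)) k := by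
  rw [forall_simpCount_le_iff isPolyhedron_orderPolytope.finite_extremePoints
    isPolyhedron_chainPolytope.finite_extremePoints] at hA hB ⊢
  rw [← complementEquiv_preimage_orderPolytope, sizePoly_simplexFaces_preimage] at hB
  rw [← orderPolytope_ordinalSum, ← chainPolytope_ordinalSum, sizePoly_simplexFaces_preimage,
    sizePoly_simplexFaces_preimage]
  have hlinkB := sizePoly_originLink_orderPolytope_sub_mem (A := Bᵒᵈ)
  rw [chainPolytope_orderDual] at hlinkB
  exact sizePoly_simplexFaces_join_sub_mem hasOriginVertex_orderPolytope
    hasOriginVertex_chainPolytope hasOriginVertex_orderPolytope hasOriginVertex_chainPolytope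
    sizePoly_originLink_orderPolytope_sub_mem hlinkB hA hB
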